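/- Let S be a quasi-hereditary algebra with Ringel dual S'. For every λ ∈ Λ⁺, the projective dimension of the standard module Δ(λ) of S equals the Δ-filtration dimension of the costandard module ∇'(λ) of S', and the ∇-filtration dimension of Δ(λ) equals the injective dimension of ∇'(λ): proj(Δ(λ)) = wfd(∇'(λ)) and gfd(Δ(λ)) = inj(∇'(λ)). -/

import Mathlib

/-!
Common definitions for formalizing "On the global and ∇-filtration dimensions of
quasi-hereditary algebras" by Erdmann and Parker.

We work with a finite-dimensional algebra `S` over a field `k`; since `S` is
finite dimensional over `k`, the finite-dimensional `S`-modules are exactly the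
finitely generated ones, so we express finite-dimensionality of a module `M` as
`Module.Finite S M`.
-/

open CategoryTheory

namespace QHPaper

variable (S : Type) [Ring S]

/-- The subquotient `B ⧸ A` associated to two submodules `A B` of `M`. -/
abbrev subquot {M : ModuleCat.{0} S} (A B : Submodule S ↥M) : Type :=
  ↥B ⧸ (Submodule.comap B.subtype A)

/-- A filtration `⊥ = f 0 ≤ f 1 ≤ ⋯ ≤ f n = ⊤` of `M` whose `i`-th section
`f (i+1) / f i` is isomorphic to the prescribed module `D i`. -/
def HasFiltrationWithSections (M : ModuleCat.{0} S) (n : ℕ)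
    (f : Fin (n + 1) → Submodule S ↥M) (D : Fin n → ModuleCat.{0} S) : Prop :=
  Monotone f ∧ f 0 = ⊥ ∧ f (Fin.last n) = ⊤ ∧
    ∀ i : Fin n, Nonempty ((subquot S (f i.castSucc) (f i.succ)) ≃ₗ[S] ↥(D i))

/-- `L` occurs as a (simple) subquotient of `M`; for `L` simple this says that `L`
is a composition factor of `M`. -/
def IsCompFactor (L M : ModuleCat.{0} S) : Prop :=
  ∃ (A B : Submodule S ↥M), A ≤ B ∧ Nonempty ((subquot S A B) ≃ₗ[S] ↥L)

/-- `L` occurs with multiplicity `m` among the sections of a composition series of `M`. -/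
def CompFactorMult (L M : ModuleCat.{0} S) (m : ℕ) : Prop :=
  ∃ (n : ℕ) (f : Fin (n + 1) → Submodule S ↥M),
    Monotone f ∧ f 0 = ⊥ ∧ f (Fin.last n) = ⊤ ∧
    (∀ i : Fin n, IsSimpleModule S (subquot S (f i.castSucc) (f i.succ))) ∧
    Nat.card {i : Fin n // Nonempty ((subquot S (f i.castSucc) (f i.succ)) ≃ₗ[S] ↥L)} = m

/-- `P` is a projective cover of `M`: `P` is projective and there is a surjection
`P → M` whose kernel is superfluous in `P`. -/
def IsProjCover (P M : ModuleCat.{0} S) : Prop :=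
  Module.Projective S ↥P ∧ ∃ π : ↥P →ₗ[S] ↥M, Function.Surjective π ∧
    ∀ N : Submodule S ↥P, N ⊔ LinearMap.ker π = ⊤ → N = ⊤

/-- `I` is an injective hull of `M`: `I` is injective and there is an injection
`M → I` with essential image. -/
def IsInjHull (I M : ModuleCat.{0} S) : Prop :=
  Module.Injective S ↥I ∧ ∃ ι : ↥M →ₗ[S] ↥I, Function.Injective ι ∧
    ∀ N : Submodule S ↥I, N ⊓ LinearMap.range ι = ⊥ → N = ⊥

/-- The data of a quasi-hereditary algebra structure on `S` with weight poset `Λ`: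
a full set `L` of pairwise non-isomorphic simple modules, their projective covers `P`
and injective hulls `I`, the standard modules `std` (largest quotient of `P lam` with
all composition factors `L mu`, `mu ≤ lam`), the costandard modules `costd`
(largest submodule of `I lam` with all composition factors `L mu`, `mu ≤ lam`),
such that `L lam` occurs exactly once in `std lam` and `P lam` is filtered by
standard modules `std mu` with `mu ≥ lam`, with `std lam` occurring exactly once. -/
structure QHData (Λ : Type) [Fintype Λ] [PartialOrder Λ] where
  L : Λ → ModuleCat.{0} S
  P : Λ → ModuleCat.{0} S
  I : Λ → ModuleCat.{0} S
  std : Λ → ModuleCat.{0} S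
  costd : Λ → ModuleCat.{0} S
  finiteL : ∀ lam, Module.Finite S ↥(L lam)
  simpleL : ∀ lam, IsSimpleModule S ↥(L lam)
  nonisoL : ∀ lam mu, lam ≠ mu → IsEmpty (↥(L lam) ≃ₗ[S] ↥(L mu))
  fullL : ∀ M : ModuleCat.{0} S, IsSimpleModule S ↥M → ∃ lam, Nonempty (↥M ≃ₗ[S] ↥(L lam))
  projCover : ∀ lam, IsProjCover S (P lam) (L lam)
  injHull : ∀ lam, IsInjHull S (I lam) (L lam)
  stdSpec : ∀ lam, ∃ K : Submodule S ↥(P lam),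
    Nonempty (↥(std lam) ≃ₗ[S] (↥(P lam) ⧸ K)) ∧
    (∀ mu, IsCompFactor S (L mu) (ModuleCat.of S (↥(P lam) ⧸ K)) → mu ≤ lam) ∧
    ∀ K' : Submodule S ↥(P lam),
      (∀ mu, IsCompFactor S (L mu) (ModuleCat.of S (↥(P lam) ⧸ K')) → mu ≤ lam) → K ≤ K'
  costdSpec : ∀ lam, ∃ V : Submodule S ↥(I lam),
    Nonempty (↥(costd lam) ≃ₗ[S] ↥V) ∧
    (∀ mu, IsCompFactor S (L mu) (ModuleCat.of S ↥V) → mu ≤ lam) ∧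
    ∀ V' : Submodule S ↥(I lam),
      (∀ mu, IsCompFactor S (L mu) (ModuleCat.of S ↥V') → mu ≤ lam) → V' ≤ V
  multOne : ∀ lam, CompFactorMult S (L lam) (std lam) 1
  projFilt : ∀ lam, ∃ (n : ℕ) (f : Fin (n + 1) → Submodule S ↥(P lam)) (g : Fin n → Λ),
    HasFiltrationWithSections S (P lam) n f (fun i => std (g i)) ∧
    (∀ i, lam ≤ g i) ∧ Nat.card {i : Fin n // g i = lam} = 1

variable {Λ : Type} [Fintype Λ] [PartialOrder Λ]

/-- `M` has a filtration with costandard sections, i.e. `M ∈ F(∇)`. -/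
def InCostdFilt (Q : QHData S Λ) (M : ModuleCat.{0} S) : Prop :=
  ∃ (n : ℕ) (f : Fin (n + 1) → Submodule S ↥M) (g : Fin n → Λ),
    HasFiltrationWithSections S M n f (fun i => Q.costd (g i))

/-- `M` has a filtration with standard sections, i.e. `M ∈ F(Δ)`. -/
def InStdFilt (Q : QHData S Λ) (M : ModuleCat.{0} S) : Prop :=
  ∃ (n : ℕ) (f : Fin (n + 1) → Submodule S ↥M) (g : Fin n → Λ),
    HasFiltrationWithSections S M n f (fun i => Q.std (g i))

/-- `0 → N 0 → N 1 → ⋯ → N (n+1) → 0` is exact. -/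
def IsExactSeq (n : ℕ) (N : Fin (n + 2) → ModuleCat.{0} S)
    (f : ∀ i : Fin (n + 1), ↥(N i.castSucc) →ₗ[S] ↥(N i.succ)) : Prop :=
  Function.Injective (f 0) ∧ Function.Surjective (f (Fin.last n)) ∧
    ∀ i : Fin n, LinearMap.range (f i.castSucc) = LinearMap.ker (f i.succ)

/-- `M` has a ∇-resolution (co-resolution by modules in `F(∇)`) of length `d`:
`0 → M → M₀ → ⋯ → M_d → 0` with each `Mᵢ ∈ F(∇)`. -/
def GfdLE (Q : QHData S Λ) (M : ModuleCat.{0} S) (d : ℕ) : Prop :=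
  ∃ (N : Fin (d + 2) → ModuleCat.{0} S)
    (f : ∀ i : Fin (d + 1), ↥(N i.castSucc) →ₗ[S] ↥(N i.succ)),
    IsExactSeq S d N f ∧ N 0 = M ∧ ∀ i : Fin (d + 1), InCostdFilt S Q (N i.succ)

/-- The ∇-filtration dimension (good filtration dimension) of a module. -/
noncomputable def gfd (Q : QHData S Λ) (M : ModuleCat.{0} S) : ℕ :=
  sInf {d | GfdLE S Q M d}

/-- `M` has a resolution `0 → M_d → ⋯ → M₀ → M → 0` with each `Mᵢ ∈ F(Δ)`. -/
def WfdLE (Q : QHData S Λ) (M : ModuleCat.{0} S) (d : ℕ) : Prop :=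
  ∃ (N : Fin (d + 2) → ModuleCat.{0} S)
    (f : ∀ i : Fin (d + 1), ↥(N i.castSucc) →ₗ[S] ↥(N i.succ)),
    IsExactSeq S d N f ∧ N (Fin.last (d + 1)) = M ∧
    ∀ i : Fin (d + 1), InStdFilt S Q (N i.castSucc)

/-- The Δ-filtration dimension of a module. -/
noncomputable def wfd (Q : QHData S Λ) (M : ModuleCat.{0} S) : ℕ :=
  sInf {d | WfdLE S Q M d}

/-- `M` has a projective resolution of length `d`. -/
def ProjdimLE (M : ModuleCat.{0} S) (d : ℕ) : Prop :=
  ∃ (N : Fin (d + 2) → ModuleCat.{0} S)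
    (f : ∀ i : Fin (d + 1), ↥(N i.castSucc) →ₗ[S] ↥(N i.succ)),
    IsExactSeq S d N f ∧ N (Fin.last (d + 1)) = M ∧
    ∀ i : Fin (d + 1), Module.Projective S ↥(N i.castSucc)

/-- The projective dimension of a module. -/
noncomputable def projdim (M : ModuleCat.{0} S) : ℕ :=
  sInf {d | ProjdimLE S M d}

/-- `M` has an injective resolution of length `d`. -/
def InjdimLE (M : ModuleCat.{0} S) (d : ℕ) : Prop :=
  ∃ (N : Fin (d + 2) → ModuleCat.{0} S)
    (f : ∀ i : Fin (d + 1), ↥(N i.castSucc) →ₗ[S] ↥(N i.succ)),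
    IsExactSeq S d N f ∧ N 0 = M ∧
    ∀ i : Fin (d + 1), Module.Injective S ↥(N i.succ)

/-- The injective dimension of a module. -/
noncomputable def injdim (M : ModuleCat.{0} S) : ℕ :=
  sInf {d | InjdimLE S M d}

/-- `gfd(S)`: the supremum of the ∇-filtration dimensions of all
finite-dimensional `S`-modules. -/
noncomputable def gfdAlg (Q : QHData S Λ) : ℕ :=
  sSup {d | ∃ M : ModuleCat.{0} S, Module.Finite S ↥M ∧ gfd S Q M = d}

/-- `wfd(S)`: the supremum of the Δ-filtration dimensions of all
finite-dimensional `S`-modules. -/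
noncomputable def wfdAlg (Q : QHData S Λ) : ℕ :=
  sSup {d | ∃ M : ModuleCat.{0} S, Module.Finite S ↥M ∧ wfd S Q M = d}

/-- The global dimension of `S`: the supremum of the projective dimensions of all
finite-dimensional `S`-modules. -/
noncomputable def globdim : ℕ :=
  sSup {d | ∃ M : ModuleCat.{0} S, Module.Finite S ↥M ∧ projdim S M = d}

/-- `Ext^n_S(A, B) ≠ 0`. -/
noncomputable def extNe (A B : ModuleCat.{0} S) (n : ℕ) : Prop :=
  Nontrivial ↥(((Ext ℤ (ModuleCat.{0} S) n).obj (Opposite.op A)).obj B)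

/-- A simple-preserving duality on `S`: a contravariant, exact, fully faithful,
additive self-functor `D` on the category of finite-dimensional `S`-modules with
`D (D M) ≅ M` and `D (L lam) ≅ L lam` for all `lam`. -/
structure Duality (Q : QHData S Λ) where
  D : ModuleCat.{0} S → ModuleCat.{0} S
  Dmap : ∀ {A B : ModuleCat.{0} S}, (↥A →ₗ[S] ↥B) → (↥(D B) →ₗ[S] ↥(D A))
  finD : ∀ M : ModuleCat.{0} S, Module.Finite S ↥M → Module.Finite S ↥(D M)
  Did : ∀ A : ModuleCat.{0} S, Module.Finite S ↥A →
    Dmap (LinearMap.id : ↥A →ₗ[S] ↥A) = LinearMap.id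
  Dcomp : ∀ {A B C : ModuleCat.{0} S}, Module.Finite S ↥A → Module.Finite S ↥B →
    Module.Finite S ↥C → ∀ (f : ↥A →ₗ[S] ↥B) (g : ↥B →ₗ[S] ↥C),
      Dmap (g ∘ₗ f) = Dmap f ∘ₗ Dmap g
  Dadd : ∀ {A B : ModuleCat.{0} S}, Module.Finite S ↥A → Module.Finite S ↥B →
    ∀ (f g : ↥A →ₗ[S] ↥B), Dmap (f + g) = Dmap f + Dmap g
  Dfull : ∀ {A B : ModuleCat.{0} S}, Module.Finite S ↥A → Module.Finite S ↥B →
    Function.Bijective (fun f : ↥A →ₗ[S] ↥B => Dmap f)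
  Dexact : ∀ {A B C : ModuleCat.{0} S}, Module.Finite S ↥A → Module.Finite S ↥B →
    Module.Finite S ↥C → ∀ (f : ↥A →ₗ[S] ↥B) (g : ↥B →ₗ[S] ↥C),
      Function.Injective f → Function.Surjective g →
      LinearMap.range f = LinearMap.ker g →
      Function.Injective (Dmap g) ∧ Function.Surjective (Dmap f) ∧
        LinearMap.range (Dmap g) = LinearMap.ker (Dmap f)
  Dinvol : ∀ M : ModuleCat.{0} S, Module.Finite S ↥M → Nonempty (↥(D (D M)) ≃ₗ[S] ↥M)
  DL : ∀ lam, Nonempty (↥(D (Q.L lam)) ≃ₗ[S] ↥(Q.L lam))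

/-- Strong property A: `mu < lam` implies `gfd (L mu) < gfd (L lam)`. -/
def StrongPropA (Q : QHData S Λ) : Prop :=
  ∀ mu lam : Λ, mu < lam → gfd S Q (Q.L mu) < gfd S Q (Q.L lam)

/-- Property A: `mu < lam` implies `gfd (L mu) ≤ gfd (L lam)`. -/
def PropA (Q : QHData S Λ) : Prop :=
  ∀ mu lam : Λ, mu < lam → gfd S Q (Q.L mu) ≤ gfd S Q (Q.L lam)

/-- Property B: `mu < lam` implies `wfd (∇ mu) ≤ wfd (∇ lam)`. -/
def PropB (Q : QHData S Λ) : Prop :=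
  ∀ mu lam : Λ, mu < lam → wfd S Q (Q.costd mu) ≤ wfd S Q (Q.costd lam)

/-- Property C: `wfd (∇ lam) = gfd S - inj (∇ lam)` for all `lam`. -/
def PropC (Q : QHData S Λ) : Prop :=
  ∀ lam : Λ, wfd S Q (Q.costd lam) = gfdAlg S Q - injdim S (Q.costd lam)

/-- Property D: `wfd (∇ lam) = wfd (L lam)` for all `lam`. -/
def PropD (Q : QHData S Λ) : Prop :=
  ∀ lam : Λ, wfd S Q (Q.costd lam) = wfd S Q (Q.L lam)

/-- Property E: `mu < lam` implies `inj (∇ mu) ≥ inj (∇ lam)`. -/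
def PropE (Q : QHData S Λ) : Prop :=
  ∀ mu lam : Λ, mu < lam → injdim S (Q.costd lam) ≤ injdim S (Q.costd mu)

/-- The partial order is minimal for the quasi-hereditary structure: whenever
`mu < lam` are adjacent, `L mu` is a composition factor of `Δ lam` or of `∇ lam`. -/
def MinimalOrder (Q : QHData S Λ) : Prop :=
  ∀ mu lam : Λ, mu < lam → (¬ ∃ nu, mu < nu ∧ nu < lam) →
    IsCompFactor S (Q.L mu) (Q.std lam) ∨ IsCompFactor S (Q.L mu) (Q.costd lam)

/-- `S` is connected (indecomposable as an algebra, i.e. one block): the only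
central idempotents are `0` and `1`. -/
def ConnectedRing : Prop :=
  ∀ c : S, c * c = c → (∀ s : S, c * s = s * c) → c = 0 ∨ c = 1

/-- A tilting module: a module in `F(Δ) ∩ F(∇)`. -/
def IsTilting (Q : QHData S Λ) (T : ModuleCat.{0} S) : Prop :=
  InStdFilt S Q T ∧ InCostdFilt S Q T

/-- The indecomposable tilting module `T(lam)`: an indecomposable tilting module in
which `L lam` occurs exactly once and all other composition factors `L mu` have
`mu < lam`. -/
def IsIndecTilting (Q : QHData S Λ) (lam : Λ) (T : ModuleCat.{0} S) : Prop :=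
  IsTilting S Q T ∧ Nontrivial ↥T ∧
    (∀ A B : Submodule S ↥T, IsCompl A B → A = ⊥ ∨ B = ⊥) ∧
    CompFactorMult S (Q.L lam) T 1 ∧
    ∀ mu, IsCompFactor S (Q.L mu) T → mu = lam ∨ mu < lam

/-- A full tilting module: a (finite-dimensional) tilting module having every
indecomposable tilting module as a direct summand. -/
def IsFullTilting (Q : QHData S Λ) (T : ModuleCat.{0} S) : Prop :=
  IsTilting S Q T ∧ Module.Finite S ↥T ∧
    ∀ (lam : Λ) (Tl : ModuleCat.{0} S), IsIndecTilting S Q lam Tl →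
      ∃ Cc : ModuleCat.{0} S, Nonempty (↥T ≃ₗ[S] (↥Tl × ↥Cc))

/-- The Ringel dual ring `S' = End_S(T)^op`. -/
abbrev RingelDualRing (T : ModuleCat.{0} S) : Type := (Module.End S ↥T)ᵐᵒᵖ

/-- `Hom_S(T, X)` is a module over `S' = End_S(T)^op` via `f • φ = φ ∘ f`. -/
instance homTModule (T X : ModuleCat.{0} S) :
    Module (RingelDualRing S T) (↥T →ₗ[S] ↥X) where
  smul a φ := φ ∘ₗ a.unop
  one_smul φ := rfl
  mul_smul a b φ := rfl
  smul_zero a := rfl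
  smul_add a φ ψ := rfl
  add_smul a b φ := by
    ext x
    show φ ((a.unop + b.unop) x) = φ (a.unop x) + φ (b.unop x)
    rw [LinearMap.add_apply, map_add]
  zero_smul φ := by
    ext x
    show φ ((0 : Module.End S ↥T) x) = 0
    rw [LinearMap.zero_apply, map_zero]

/-- The `S'`-module `Hom_S(T, X)`, i.e. the image of `X` under the functor
`F = Hom_S(T, -)`. -/
noncomputable def homTMod (T X : ModuleCat.{0} S) :
    ModuleCat.{0} (RingelDualRing S T) :=
  ModuleCat.of (RingelDualRing S T) (↥T →ₗ[S] ↥X)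

/-- `Q'` is a Ringel dual quasi-hereditary structure for `(Q, T)`:
`T` is a full tilting module, `Q'` is a quasi-hereditary structure on
`S' = End_S(T)^op` for the opposite poset, and its standard modules are
`Δ'(lam) = Hom_S(T, ∇(lam))`. -/
def IsRingelDualData (Q : QHData S Λ) (T : ModuleCat.{0} S)
    (Q' : QHData (RingelDualRing S T) Λᵒᵈ) : Prop :=
  IsFullTilting S Q T ∧
    ∀ lam : Λ, Nonempty
      (↥(Q'.std (OrderDual.toDual lam)) ≃ₗ[RingelDualRing S T]
        (↥T →ₗ[S] ↥(Q.costd lam)))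

/-- `0 → T_d → ⋯ → T_0 → M → 0` exact with all `T_i` tilting modules. -/
def TiltResLE (Q : QHData S Λ) (M : ModuleCat.{0} S) (d : ℕ) : Prop :=
  ∃ (N : Fin (d + 2) → ModuleCat.{0} S)
    (f : ∀ i : Fin (d + 1), ↥(N i.castSucc) →ₗ[S] ↥(N i.succ)),
    IsExactSeq S d N f ∧ N (Fin.last (d + 1)) = M ∧
    ∀ i : Fin (d + 1), IsTilting S Q (N i.castSucc)

/-- An idempotent `e` is primitive if it is nonzero and is not the sum of two
nonzero orthogonal idempotents. -/
def IsPrimitiveIdempotent (e : S) : Prop :=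
  e * e = e ∧ e ≠ 0 ∧ ∀ a b : S, a * a = a → b * b = b → a * b = 0 → b * a = 0 →
    e = a + b → a = 0 ∨ b = 0

/-- The additive subgroup `e•M = {m | e • m = m}` of `M` (for `e` idempotent). -/
def cornerSet (eG : S) (M : ModuleCat.{0} S) : AddSubgroup ↥M where
  carrier := {m | eG • m = m}
  add_mem' := by
    intro a b ha hb
    simp only [Set.mem_setOf_eq] at *
    rw [smul_add, ha, hb]
  zero_mem' := by
    simp only [Set.mem_setOf_eq]
    rw [smul_zero]
  neg_mem' := by
    intro a ha
    simp only [Set.mem_setOf_eq] at *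
    rw [smul_neg, ha]

/-- The `R`-module structure on `e•M`, where `ι : R → S` identifies `R` with the
corner ring `eSe` (as a non-unital ring, with `ι 1 = e`). -/
def cornerModuleStructure (R : Type) [Ring R] (ι : R →ₙ+* S) (eG : S)
    (hone : ι 1 = eG) (hrange : ∀ r : R, eG * ι r * eG = ι r)
    (M : ModuleCat.{0} S) : Module R ↥(cornerSet S eG M) where
  smul r m := ⟨ι r • (m : ↥M), by
    have hm : eG • (m : ↥M) = (m : ↥M) := m.2
    show eG • (ι r • (m : ↥M)) = ι r • (m : ↥M)
    have h : eG • (ι r • (m : ↥M)) = (eG * ι r * eG) • (m : ↥M) := by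
      rw [mul_assoc, mul_smul, mul_smul, hm]
    rw [h, hrange]⟩
  one_smul m := by
    apply Subtype.ext
    show ι 1 • (m : ↥M) = (m : ↥M)
    rw [hone]
    exact m.2
  mul_smul r s m := by
    apply Subtype.ext
    show ι (r * s) • (m : ↥M) = ι r • (ι s • (m : ↥M))
    rw [map_mul, mul_smul]
  smul_zero r := by
    apply Subtype.ext
    show ι r • (0 : ↥M) = 0
    rw [smul_zero]
  smul_add r m n := by
    apply Subtype.ext
    show ι r • ((m : ↥M) + (n : ↥M)) = ι r • (m : ↥M) + ι r • (n : ↥M)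
    rw [smul_add]
  add_smul r s m := by
    apply Subtype.ext
    show ι (r + s) • (m : ↥M) = ι r • (m : ↥M) + ι s • (m : ↥M)
    rw [map_add, add_smul]
  zero_smul m := by
    apply Subtype.ext
    show ι 0 • (m : ↥M) = 0
    rw [map_zero, zero_smul]

/-- The `R`-module `e•M`, where `R ≅ eSe` via `ι`. -/
noncomputable def cornerMod (R : Type) [Ring R] (ι : R →ₙ+* S) (eG : S)
    (hone : ι 1 = eG) (hrange : ∀ r : R, eG * ι r * eG = ι r)
    (M : ModuleCat.{0} S) : ModuleCat.{0} R :=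
  @ModuleCat.of R _ ↥(cornerSet S eG M) _
    (cornerModuleStructure S R ι eG hone hrange M)

end QHPaper

/-!
Write `D = Hom_k(-, k)` and consider `G = D Hom_S(-, T)` from `S`-modules to `S'`-modules. On
`F(Δ)` it is exact and fully faithful, it sends projectives into `F(Δ')`, sums of copies of `T` to
injectives, and `F(Δ)` into `F(∇')`; finally `G(Δ(λ))` is filtered by copies of `∇'(λ)` and has
`∇'(λ)` as a retract, so the two have the same homological dimensions.

Each of the four dimensions being at most `d` is the vanishing of `Ext` above degree `d` against
all modules, or against all standard or costandard ones. These conditions on `X` and on `G(X)` are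
compared by induction on `d`, shifting along `0 → K → P → X → 0` with `P` projective for `proj` and
`wfd`, and along `0 → X → Tⁿ → C → 0` with `C` in `F(Δ)` for `gfd` and `inj`. In degree zero they
say that such a sequence splits, and full faithfulness of `G` transports splittings.
-/

namespace QHPaper

open Abelian Function

universe u

section Ext

variable {S : Type u} [Ring S] {A B C M N X Y : Type u}
  [AddCommGroup A] [Module S A] [AddCommGroup B] [Module S B] [AddCommGroup C] [Module S C]
  [AddCommGroup M] [Module S M] [AddCommGroup N] [Module S N]
  [AddCommGroup X] [Module S X] [AddCommGroup Y] [Module S Y]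

/-- The sequence of modules `0 → A → B → C → 0` given by `f` and `g` is exact. -/
structure IsShortExact (f : A →ₗ[S] B) (g : B →ₗ[S] C) : Prop where
  injective : Injective f
  exact : Exact f g
  surjective : Surjective g

theorem isShortExact_subtype_mkQ (N : Submodule S M) : IsShortExact N.subtype N.mkQ :=
  ⟨N.injective_subtype, LinearMap.exact_subtype_mkQ N, N.mkQ_surjective⟩

theorem isShortExact_ker {g : B →ₗ[S] C} (hg : Surjective g) :
    IsShortExact (LinearMap.ker g).subtype g :=
  ⟨Submodule.injective_subtype _, LinearMap.exact_subtype_ker_map g, hg⟩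

theorem isShortExact_mkQ_range {f : A →ₗ[S] B} (hf : Injective f) :
    IsShortExact f (LinearMap.range f).mkQ :=
  ⟨hf, LinearMap.exact_map_mkQ_range f, Submodule.mkQ_surjective _⟩

/-- The vanishing of `Ext^n_S(M, N)`. -/
def ExtVanishes (S : Type u) [Ring S] (M N : Type u) [AddCommGroup M] [Module S M]
    [AddCommGroup N] [Module S N] (n : ℕ) : Prop :=
  Subsingleton (Ext (ModuleCat.of S M) (ModuleCat.of S N) n)

theorem extVanishes_iff {n : ℕ} : ExtVanishes S M N n ↔
    ∀ e : Ext (ModuleCat.of S M) (ModuleCat.of S N) n, e = 0 :=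
  ⟨fun h _ => h.elim _ _, subsingleton_of_forall_eq 0⟩

theorem extVanishes_zero_iff : ExtVanishes S M N 0 ↔ ∀ u : M →ₗ[S] N, u = 0 := by
  rw [ExtVanishes, Ext.addEquiv₀.subsingleton_congr, ModuleCat.homEquiv.subsingleton_congr]
  exact ⟨fun _ _ => Subsingleton.elim _ _, subsingleton_of_forall_eq 0⟩

theorem ExtVanishes.of_projective [Module.Projective S M] (n : ℕ) :
    ExtVanishes S M N (n + 1) :=
  have : Projective (ModuleCat.of S M) := (IsProjective.iff_projective M).1 ‹_›
  Ext.subsingleton_of_projective _ _ n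

theorem ExtVanishes.of_injective [Module.Injective S N] (n : ℕ) :
    ExtVanishes S M N (n + 1) :=
  have : Injective (ModuleCat.of S N) := (Module.injective_iff_injective_object S N).1 ‹_›
  Ext.subsingleton_of_injective _ _ n

theorem projective_of_extVanishes
    (h : ∀ (N : Type u) [AddCommGroup N] [Module S N], ExtVanishes S M N 1) :
    Module.Projective S M :=
  (IsProjective.iff_projective M).2 (projective_iff_subsingleton_ext_one.2 fun {N} => h N)

theorem injective_of_extVanishes
    (h : ∀ (N : Type u) [AddCommGroup N] [Module S N], ExtVanishes S N M 1) :
    Module.Injective S M :=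
  (Module.injective_iff_injective_object S M).2
    (injective_iff_subsingleton_ext_one.2 fun {N} => h N)

namespace ExtVanishes

variable {n : ℕ}

theorem retract_left {i : M →ₗ[S] N} {r : N →ₗ[S] M} (hri : r ∘ₗ i = LinearMap.id)
    (h : ExtVanishes S N Y n) : ExtVanishes S M Y n := by
  rw [extVanishes_iff] at *
  intro e
  have hid : ModuleCat.ofHom i ≫ ModuleCat.ofHom r = 𝟙 _ := ModuleCat.hom_ext hri
  rw [← Ext.mk₀_id_comp e, ← hid, ← Ext.mk₀_comp_mk₀_assoc, h ((Ext.mk₀ _).comp e _),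
    Ext.comp_zero]

theorem retract_right {i : M →ₗ[S] N} {r : N →ₗ[S] M} (hri : r ∘ₗ i = LinearMap.id)
    (h : ExtVanishes S Y N n) : ExtVanishes S Y M n := by
  rw [extVanishes_iff] at *
  intro e
  have hid : ModuleCat.ofHom i ≫ ModuleCat.ofHom r = 𝟙 _ := ModuleCat.hom_ext hri
  rw [← Ext.comp_mk₀_id e, ← hid, ← Ext.mk₀_comp_mk₀, ← Ext.comp_assoc_of_third_deg_zero,
    h (e.comp (Ext.mk₀ _) _), Ext.zero_comp]

theorem congr_left (e : M ≃ₗ[S] N) (h : ExtVanishes S N Y n) : ExtVanishes S M Y n :=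
  h.retract_left e.symm_comp

theorem congr_right (e : M ≃ₗ[S] N) (h : ExtVanishes S Y N n) : ExtVanishes S Y M n :=
  h.retract_right e.symm_comp

end ExtVanishes

namespace IsShortExact

variable {f : A →ₗ[S] B} {g : B →ₗ[S] C}

theorem shortExact (h : IsShortExact f g) :
    (ShortComplex.mk (ModuleCat.ofHom f) (ModuleCat.ofHom g)
      (ModuleCat.hom_ext h.exact.linearMap_comp_eq_zero)).ShortExact :=
  ModuleCat.shortComplex_shortExact _ h.exact h.injective h.surjective

theorem exists_lift (h : IsShortExact f g) {u : X →ₗ[S] B} (hu : g ∘ₗ u = 0) :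
    ∃ v : X →ₗ[S] A, f ∘ₗ v = u := by
  have hrange (x : X) : u x ∈ LinearMap.range f := (h.exact _).1 (LinearMap.congr_fun hu x)
  refine ⟨(LinearEquiv.ofInjective f h.injective).symm.toLinearMap ∘ₗ u.codRestrict _ hrange, ?_⟩
  ext x
  exact congrArg Subtype.val
    ((LinearEquiv.ofInjective f h.injective).apply_symm_apply (u.codRestrict _ hrange x))

theorem exists_desc (h : IsShortExact f g) {u : B →ₗ[S] X} (hu : u ∘ₗ f = 0) :
    ∃ v : C →ₗ[S] X, v ∘ₗ g = u := by
  have hker : LinearMap.range f ≤ LinearMap.ker u := LinearMap.range_le_ker_iff.2 hu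
  refine ⟨(LinearMap.range f).liftQ u hker ∘ₗ
    (h.exact.linearEquivOfSurjective h.surjective).symm.toLinearMap, ?_⟩
  ext b
  simp

section Ext

variable {n : ℕ}

theorem extVanishes_middle_right (h : IsShortExact f g) (hA : ExtVanishes S X A n)
    (hC : ExtVanishes S X C n) : ExtVanishes S X B n := by
  rw [extVanishes_iff] at *
  intro e
  obtain ⟨x, rfl⟩ := Ext.covariant_sequence_exact₂ _ h.shortExact e (hC _)
  rw [hA x, Ext.zero_comp]

theorem extVanishes_middle_left (h : IsShortExact f g) (hA : ExtVanishes S A X n)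
    (hC : ExtVanishes S C X n) : ExtVanishes S B X n := by
  rw [extVanishes_iff] at *
  intro e
  obtain ⟨x, rfl⟩ := Ext.contravariant_sequence_exact₂ h.shortExact _ e (hA _)
  rw [hC x, Ext.comp_zero]

theorem extVanishes_quotient_right (h : IsShortExact f g) (hB : ExtVanishes S X B n)
    (hA : ExtVanishes S X A (n + 1)) : ExtVanishes S X C n := by
  rw [extVanishes_iff] at *
  intro e
  obtain ⟨x, rfl⟩ := Ext.covariant_sequence_exact₃ _ h.shortExact e rfl (hA _)
  rw [hB x, Ext.zero_comp]

theorem extVanishes_sub_right (h : IsShortExact f g) (hC : ExtVanishes S X C n)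
    (hB : ExtVanishes S X B (n + 1)) : ExtVanishes S X A (n + 1) := by
  rw [extVanishes_iff] at *
  intro e
  obtain ⟨x, rfl⟩ := Ext.covariant_sequence_exact₁ _ h.shortExact e (hB _) rfl
  rw [hC x, Ext.zero_comp]

theorem extVanishes_sub_left (h : IsShortExact f g) (hB : ExtVanishes S B X n)
    (hC : ExtVanishes S C X (n + 1)) : ExtVanishes S A X n := by
  rw [extVanishes_iff] at *
  intro e
  obtain ⟨x, rfl⟩ := Ext.contravariant_sequence_exact₁ h.shortExact _ e (add_comm 1 n) (hC _)
  rw [hB x, Ext.comp_zero]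

theorem extVanishes_quotient_left (h : IsShortExact f g) (hA : ExtVanishes S A X n)
    (hB : ExtVanishes S B X (n + 1)) : ExtVanishes S C X (n + 1) := by
  rw [extVanishes_iff] at *
  intro e
  obtain ⟨x, rfl⟩ := Ext.contravariant_sequence_exact₃ h.shortExact _ e (hB _) (add_comm 1 n)
  rw [hA x, Ext.comp_zero]

theorem exists_comp_eq_of_extVanishes_one (h : IsShortExact f g) (hA : ExtVanishes S X A 1)
    (u : X →ₗ[S] C) : ∃ v : X →ₗ[S] B, g ∘ₗ v = u := by
  obtain ⟨x, hx⟩ := Ext.covariant_sequence_exact₃ _ h.shortExact (Ext.mk₀ (ModuleCat.ofHom u))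
    rfl (extVanishes_iff.1 hA _)
  obtain ⟨v, rfl⟩ := Ext.mk₀_bijective _ _ |>.2 x
  rw [Ext.mk₀_comp_mk₀] at hx
  exact ⟨v.hom, congrArg ModuleCat.Hom.hom ((Ext.mk₀_bijective _ _).1 hx)⟩

theorem exists_extend_of_extVanishes_one (h : IsShortExact f g) (hC : ExtVanishes S C X 1)
    (u : A →ₗ[S] X) : ∃ v : B →ₗ[S] X, v ∘ₗ f = u := by
  obtain ⟨x, hx⟩ := Ext.contravariant_sequence_exact₁ h.shortExact _
    (Ext.mk₀ (ModuleCat.ofHom u)) rfl (extVanishes_iff.1 hC _)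
  obtain ⟨v, rfl⟩ := Ext.mk₀_bijective _ _ |>.2 x
  rw [Ext.mk₀_comp_mk₀] at hx
  exact ⟨v.hom, congrArg ModuleCat.Hom.hom ((Ext.mk₀_bijective _ _).1 hx)⟩

theorem extVanishes_one_of_exists_comp_eq (h : IsShortExact f g) (hB : ExtVanishes S X B 1)
    (hlift : ∀ u : X →ₗ[S] C, ∃ v : X →ₗ[S] B, g ∘ₗ v = u) : ExtVanishes S X A 1 := by
  rw [extVanishes_iff] at *
  intro e
  obtain ⟨x, rfl⟩ := Ext.covariant_sequence_exact₁ _ h.shortExact e (hB _) (zero_add 1)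
  obtain ⟨u, rfl⟩ := Ext.mk₀_bijective _ _ |>.2 x
  obtain ⟨v, hv⟩ := hlift u.hom
  have hu : u = ModuleCat.ofHom v ≫ ModuleCat.ofHom g := ModuleCat.hom_ext hv.symm
  rw [hu, ← Ext.mk₀_comp_mk₀, Ext.comp_assoc_of_second_deg_zero]
  exact (congrArg (Ext.comp _ · _) h.shortExact.comp_extClass).trans (Ext.comp_zero ..)

theorem extVanishes_one_of_exists_extend (h : IsShortExact f g) (hB : ExtVanishes S B X 1)
    (hext : ∀ u : A →ₗ[S] X, ∃ v : B →ₗ[S] X, v ∘ₗ f = u) : ExtVanishes S C X 1 := by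
  rw [extVanishes_iff] at *
  intro e
  obtain ⟨x, rfl⟩ := Ext.contravariant_sequence_exact₃ h.shortExact _ e (hB _) (add_zero 1)
  obtain ⟨u, rfl⟩ := Ext.mk₀_bijective _ _ |>.2 x
  obtain ⟨v, hv⟩ := hext u.hom
  have hu : u = ModuleCat.ofHom f ≫ ModuleCat.ofHom v := ModuleCat.hom_ext hv.symm
  rw [hu, ← Ext.mk₀_comp_mk₀]
  exact h.shortExact.extClass_comp_assoc (Ext.mk₀ (ModuleCat.ofHom v))

end Ext

end IsShortExact

end Ext

section Filtrations

section

variable {S : Type u} [Ring S] {ι : Type*} {D : ι → ModuleCat.{u} S} {s t : Set ι}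

/-- The iterated extensions of modules `D i` with `i ∈ s`: the inductive form of having a filtration
with sections among these modules. -/
inductive IsFilteredBy (D : ι → ModuleCat.{u} S) (s : Set ι) : ModuleCat.{u} S → Prop
  | zero (M : ModuleCat.{u} S) (h : Subsingleton M) : IsFilteredBy D s M
  | extend {A M : ModuleCat.{u} S} {i : ι} (hi : i ∈ s) {f : A →ₗ[S] M} {g : M →ₗ[S] D i}
      (h : IsShortExact f g) (hA : IsFilteredBy D s A) : IsFilteredBy D s M

namespace IsShortExact

variable {A B C B' : Type u} [AddCommGroup A] [Module S A] [AddCommGroup B] [Module S B]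
  [AddCommGroup C] [Module S C] [AddCommGroup B'] [Module S B'] {f : A →ₗ[S] B} {g : B →ₗ[S] C}

theorem congr_middle (h : IsShortExact f g) (e : B ≃ₗ[S] B') :
    IsShortExact (e.toLinearMap ∘ₗ f) (g ∘ₗ e.symm.toLinearMap) :=
  ⟨e.injective.comp h.injective, (LinearEquiv.conj_exact_iff_exact f g e).2 h.exact,
    h.surjective.comp e.symm.surjective⟩

theorem exists_ker_comp {K D : Type u} [AddCommGroup K] [Module S K] [AddCommGroup D] [Module S D]
    {i : K →ₗ[S] C} {p : C →ₗ[S] D} (h : IsShortExact f g) (hip : IsShortExact i p) :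
    ∃ (a : A →ₗ[S] LinearMap.ker (p ∘ₗ g)) (b : LinearMap.ker (p ∘ₗ g) →ₗ[S] K),
      IsShortExact a b ∧ i ∘ₗ b = g ∘ₗ (LinearMap.ker (p ∘ₗ g)).subtype := by
  obtain ⟨b, hb⟩ := hip.exists_lift (u := g ∘ₗ (LinearMap.ker (p ∘ₗ g)).subtype)
    (LinearMap.ext fun x => x.2)
  have hgf (a : A) : g (f a) = 0 := h.exact.apply_apply_eq_zero a
  refine ⟨f.codRestrict _ fun a => by simp [hgf], b, ⟨fun x y hxy => ?_, fun x => ?_, fun c => ?_⟩,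
    hb⟩
  · exact h.injective (congrArg Subtype.val hxy)
  · rw [← map_eq_zero_iff i hip.injective, ← LinearMap.comp_apply, hb]
    exact (h.exact _).trans (exists_congr fun a =>
      (Subtype.ext_iff (a1 := f.codRestrict _ _ a) (a2 := x)).symm)
  · obtain ⟨x, hx⟩ := h.surjective (i c)
    refine ⟨⟨x, by simp [hx, hip.exact.apply_apply_eq_zero]⟩, hip.injective ?_⟩
    rw [← LinearMap.comp_apply, hb]
    exact hx

end IsShortExact

namespace IsFilteredBy

theorem congr {M N : ModuleCat.{u} S} (e : M ≃ₗ[S] N) (h : IsFilteredBy D s M) :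
    IsFilteredBy D s N := by
  cases h with
  | zero _ h => exact .zero _ e.symm.injective.subsingleton
  | extend hi h hA => exact .extend hi (h.congr_middle e) hA

theorem mono {M : ModuleCat.{u} S} (h : IsFilteredBy D s M) (hst : s ⊆ t) :
    IsFilteredBy D t M := by
  induction h with
  | zero M h => exact .zero _ h
  | extend hi h _ ih => exact .extend (hst hi) h ih

theorem single {i : ι} (hi : i ∈ s) : IsFilteredBy D s (D i) :=
  .extend (A := ModuleCat.of S PUnit) (f := 0) (g := LinearMap.id) hi
    ⟨injective_of_subsingleton _, (LinearMap.exact_zero_iff_injective _ _).2 injective_id,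
      surjective_id⟩ (.zero _ inferInstance)

theorem of_isShortExact {A B C : ModuleCat.{u} S} {f : A →ₗ[S] B} {g : B →ₗ[S] C}
    (h : IsShortExact f g) (hA : IsFilteredBy D s A) (hC : IsFilteredBy D s C) :
    IsFilteredBy D s B := by
  induction hC generalizing B with
  | zero C hC =>
    have hf : Surjective f := fun b => (h.exact b).1 (Subsingleton.elim _ _)
    exact hA.congr (LinearEquiv.ofBijective f ⟨h.injective, hf⟩)
  | extend hi h' _ ih =>
    obtain ⟨a, b, hab, -⟩ := h.exists_ker_comp h'
    exact .extend (A := ModuleCat.of S _) hi (isShortExact_ker (h'.surjective.comp h.surjective))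
      (ih (B := ModuleCat.of S _) hab)

theorem prod {A B : ModuleCat.{u} S} (hA : IsFilteredBy D s A) (hB : IsFilteredBy D s B) :
    IsFilteredBy D s (ModuleCat.of S (A × B)) :=
  of_isShortExact (f := LinearMap.inl S A B) (g := LinearMap.snd S A B)
    ⟨LinearMap.inl_injective, Exact.inl_snd, LinearMap.snd_surjective⟩ hA hB

theorem pow {A : ModuleCat.{u} S} (hA : IsFilteredBy D s A) (n : ℕ) :
    IsFilteredBy D s (ModuleCat.of S (Fin n → A)) := by
  induction n with
  | zero => exact .zero _ (inferInstanceAs (Subsingleton (Fin 0 → A)))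
  | succ n ih =>
    exact congr (M := ModuleCat.of S (A × (Fin n → A))) (Fin.consLinearEquiv S fun _ => A)
      (hA.prod ih)

theorem finite {M : ModuleCat.{u} S} (h : IsFilteredBy D s M)
    (hD : ∀ i, Module.Finite S (D i)) : Module.Finite S M := by
  induction h with
  | zero M h => infer_instance
  | extend _ h _ ih => exact Module.Finite.of_exact h.exact h.surjective

theorem extVanishes_left {X : Type u} [AddCommGroup X] [Module S X] {n : ℕ} {M : ModuleCat.{u} S}
    (h : IsFilteredBy D s M) (hD : ∀ i ∈ s, ExtVanishes S (D i) X n) : ExtVanishes S M X n := by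
  induction h with
  | zero M h =>
    cases n with
    | zero => exact extVanishes_zero_iff.2 fun u => Subsingleton.elim _ _
    | succ n =>
      have : Module.Projective S M := have := Module.Free.of_subsingleton S M; .of_free
      exact .of_projective n
  | extend hi h _ ih => exact h.extVanishes_middle_left ih (hD _ hi)

theorem extVanishes_right {X : Type u} [AddCommGroup X] [Module S X] {n : ℕ} {M : ModuleCat.{u} S}
    (h : IsFilteredBy D s M) (hD : ∀ i ∈ s, ExtVanishes S X (D i) n) : ExtVanishes S X M n := by
  induction h with
  | zero M h =>
    cases n with
    | zero => exact extVanishes_zero_iff.2 fun u => Subsingleton.elim _ _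
    | succ n =>
      have : Module.Injective S M := ⟨fun _ _ _ _ _ _ _ _ _ => ⟨0, fun _ => Subsingleton.elim _ _⟩⟩
      exact .of_injective n
  | extend hi h _ ih => exact h.extVanishes_middle_right ih (hD _ hi)

end IsFilteredBy

end

variable {S : Type} [Ring S] {ι : Type*} {D : ι → ModuleCat.{0} S}

section Sections

theorem nonempty_subquot_equiv_iff {M X : ModuleCat.{0} S} (A B : Submodule S M) :
    Nonempty (subquot S A B ≃ₗ[S] X) ↔
      ∃ u : B →ₗ[S] X, Surjective u ∧ LinearMap.ker u = A.comap B.subtype := by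
  constructor
  · rintro ⟨e⟩
    exact ⟨e.toLinearMap ∘ₗ Submodule.mkQ _, e.surjective.comp (Submodule.mkQ_surjective _),
      by simp⟩
  · rintro ⟨u, hu, hker⟩
    exact ⟨(Submodule.quotEquivOfEq _ _ hker.symm).trans (u.quotKerEquivOfSurjective hu)⟩

theorem exists_isShortExact_of_subquot {M X : ModuleCat.{0} S} {A B : Submodule S M} (hAB : A ≤ B)
    (e : subquot S A B ≃ₗ[S] X) :
    ∃ g : B →ₗ[S] X, IsShortExact (Submodule.inclusion hAB) g := by
  obtain ⟨u, hu, hker⟩ := (nonempty_subquot_equiv_iff A B).1 ⟨e⟩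
  refine ⟨u, Submodule.inclusion_injective hAB, ?_, hu⟩
  rw [LinearMap.exact_iff, hker, Submodule.range_inclusion]

theorem IsShortExact.nonempty_subquot_range {A M C : ModuleCat.{0} S} {f : A →ₗ[S] M}
    {g : M →ₗ[S] C} (h : IsShortExact f g) :
    Nonempty (subquot S (LinearMap.range f) ⊤ ≃ₗ[S] C) := by
  refine (nonempty_subquot_equiv_iff _ _).2 ⟨g ∘ₗ Submodule.subtype _, ?_, ?_⟩
  · exact h.surjective.comp (Submodule.topEquiv (R := S) (M := M)).surjective
  · rw [LinearMap.ker_comp, h.exact.linearMap_ker_eq]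

theorem nonempty_subquot_map {A M X : ModuleCat.{0} S} {f : A →ₗ[S] M} (hf : Injective f)
    {U V : Submodule S A} (e : subquot S U V ≃ₗ[S] X) :
    Nonempty (subquot S (U.map f) (V.map f) ≃ₗ[S] X) := by
  obtain ⟨u, hu, hker⟩ := (nonempty_subquot_equiv_iff U V).1 ⟨e⟩
  let eV := V.equivMapOfInjective f hf
  refine (nonempty_subquot_equiv_iff _ _).2
    ⟨u ∘ₗ eV.symm.toLinearMap, hu.comp eV.symm.surjective, ?_⟩
  ext b
  obtain ⟨a, rfl⟩ := eV.surjective b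
  have ha : a ∈ LinearMap.ker u ↔ (a : A) ∈ U := by rw [hker]; rfl
  have hmap : f a ∈ U.map f ↔ (a : A) ∈ U :=
    ⟨fun ⟨y, hy, hya⟩ => hf hya ▸ hy, fun h => ⟨_, h, rfl⟩⟩
  simpa [LinearMap.mem_ker, eV] using ha.trans hmap.symm

end Sections

theorem HasFiltrationWithSections.isFilteredBy_apply {M : ModuleCat.{0} S} {n : ℕ}
    {f : Fin (n + 1) → Submodule S M} {g : Fin n → ι}
    (h : HasFiltrationWithSections S M n f fun i => D (g i)) {s : Set ι} (j : Fin (n + 1))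
    (hs : ∀ i, i.castSucc < j → g i ∈ s) : IsFilteredBy D s (ModuleCat.of S (f j)) := by
  induction j using Fin.induction with
  | zero => exact .zero _ (by rw [h.2.1]; infer_instance)
  | succ i ih =>
    obtain ⟨u, hu⟩ := exists_isShortExact_of_subquot (h.1 i.castSucc_le_succ) (h.2.2.2 i).some
    exact .extend (hs i i.castSucc_lt_succ) hu
      (ih fun j hj => hs j (hj.trans i.castSucc_lt_succ))

theorem HasFiltrationWithSections.isFilteredBy {M : ModuleCat.{0} S} {n : ℕ}
    {f : Fin (n + 1) → Submodule S M} {g : Fin n → ι}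
    (h : HasFiltrationWithSections S M n f fun i => D (g i)) :
    IsFilteredBy D Set.univ M := by
  have hM := h.isFilteredBy_apply (Fin.last n) fun i _ => Set.mem_univ (g i)
  rw [h.2.2.1] at hM
  exact hM.congr Submodule.topEquiv

theorem HasFiltrationWithSections.snoc {A M C : ModuleCat.{0} S} {n : ℕ}
    {F : Fin (n + 1) → Submodule S A} {E : Fin n → ModuleCat.{0} S}
    (hF : HasFiltrationWithSections S A n F E) {f : A →ₗ[S] M} {g : M →ₗ[S] C}
    (h : IsShortExact f g) :
    HasFiltrationWithSections S M (n + 1)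
      (Fin.snoc (α := fun _ => Submodule S M) (fun j => (F j).map f) ⊤)
      (Fin.snoc (α := fun _ => ModuleCat.{0} S) E C) := by
  obtain ⟨hmono, hbot, htop, hsec⟩ := hF
  refine ⟨Fin.monotone_iff_le_succ.2 fun j => ?_, ?_, Fin.snoc_last _ _, fun j => ?_⟩
  · cases j using Fin.lastCases with
    | last => simp
    | cast j =>
      rw [Fin.succ_castSucc, Fin.snoc_castSucc, Fin.snoc_castSucc]
      exact Submodule.map_mono (hmono j.castSucc_le_succ)
  · rw [← Fin.castSucc_zero, Fin.snoc_castSucc, hbot, Submodule.map_bot]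
  · cases j using Fin.lastCases with
    | last =>
      rw [Fin.snoc_castSucc, Fin.succ_last, Fin.snoc_last, Fin.snoc_last, htop, Submodule.map_top]
      exact h.nonempty_subquot_range
    | cast j =>
      rw [Fin.succ_castSucc, Fin.snoc_castSucc, Fin.snoc_castSucc, Fin.snoc_castSucc]
      exact nonempty_subquot_map h.injective (hsec j).some

theorem IsFilteredBy.exists_hasFiltrationWithSections {s : Set ι} {M : ModuleCat.{0} S}
    (h : IsFilteredBy D s M) :
    ∃ (n : ℕ) (f : Fin (n + 1) → Submodule S M) (g : Fin n → ι),
      HasFiltrationWithSections S M n f fun i => D (g i) := by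
  induction h with
  | zero M h =>
    exact ⟨0, fun _ => ⊥, Fin.elim0, fun _ _ _ => le_rfl, rfl, Subsingleton.elim _ _,
      fun i => i.elim0⟩
  | @extend A M i _ f g h _ ih =>
    obtain ⟨n, F, G, hF⟩ := ih
    have hD : Fin.snoc (α := fun _ => ModuleCat S) (fun j => D (G j)) (D i) =
        fun j => D (Fin.snoc (α := fun _ => ι) G i j) := (Fin.comp_snoc D G i).symm
    exact ⟨n + 1, _, Fin.snoc (α := fun _ => ι) G i, hD ▸ hF.snoc h⟩

end Filtrations

section SimpleModules

variable {S : Type} [Ring S] {Λ : Type} [Fintype Λ] [PartialOrder Λ] (Q : QHData S Λ)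
  {A B C M N : Type} [AddCommGroup A] [Module S A] [AddCommGroup B] [Module S B]
  [AddCommGroup C] [Module S C] [AddCommGroup M] [Module S M] [AddCommGroup N] [Module S N]
  {l m : Λ}

attribute [instance] QHData.finiteL QHData.simpleL

namespace QHData

instance projective_P (l : Λ) : Module.Projective S (Q.P l) := (Q.projCover l).1

instance injective_I (l : Λ) : Module.Injective S (Q.I l) := (Q.injHull l).1

instance nontrivial_L (l : Λ) : Nontrivial (Q.L l) := IsSimpleModule.nontrivial S _

/-- The projective cover `P(l) → L(l)`. -/
noncomputable def projToSimple (l : Λ) : Q.P l →ₗ[S] Q.L l := (Q.projCover l).2.choose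

theorem projToSimple_surjective (l : Λ) : Surjective (Q.projToSimple l) :=
  (Q.projCover l).2.choose_spec.1

theorem projToSimple_ne_zero (l : Λ) : Q.projToSimple l ≠ 0 :=
  LinearMap.ne_zero_of_surjective (Q.projToSimple_surjective l)

theorem surjective_of_projToSimple_comp_ne_zero {u : M →ₗ[S] Q.P l}
    (hu : Q.projToSimple l ∘ₗ u ≠ 0) : Surjective u := by
  have hcoatom := LinearMap.isCoatom_ker_of_surjective (Q.projToSimple_surjective l)
  have hcodisjoint := hcoatom.not_le_iff_codisjoint.1 (mt LinearMap.range_le_ker_iff.1 hu)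
  exact LinearMap.range_eq_top.1 ((Q.projCover l).2.choose_spec.2 _ hcodisjoint.symm.eq_top)

theorem projToSimple_apply_eq_zero {u : Q.P l →ₗ[S] M} (hu : u ≠ 0) {x : Q.P l} (hx : u x = 0) :
    Q.projToSimple l x = 0 := by
  by_contra hne
  have hsub : Q.projToSimple l ∘ₗ (LinearMap.ker u).subtype ≠ 0 :=
    fun h => hne (LinearMap.congr_fun h ⟨x, hx⟩)
  refine hu (LinearMap.ext fun y => ?_)
  obtain ⟨z, rfl⟩ := Q.surjective_of_projToSimple_comp_ne_zero hsub y
  exact z.2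

/-- The injective hull `L(l) → I(l)`. -/
noncomputable def simpleToInj (l : Λ) : Q.L l →ₗ[S] Q.I l := (Q.injHull l).2.choose

theorem simpleToInj_injective (l : Λ) : Injective (Q.simpleToInj l) :=
  (Q.injHull l).2.choose_spec.1

theorem injective_of_comp_simpleToInj_ne_zero {u : Q.I l →ₗ[S] M}
    (hu : u ∘ₗ Q.simpleToInj l ≠ 0) : Injective u := by
  refine LinearMap.ker_eq_bot.1 ((Q.injHull l).2.choose_spec.2 _ ?_)
  rw [eq_bot_iff]
  rintro _ ⟨hx, y, rfl⟩
  have hy : y = 0 := LinearMap.injective_of_ne_zero hu (hx.trans (map_zero _).symm)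
  rw [hy, map_zero, Submodule.mem_bot]

theorem simpleToInj_ne_zero (l : Λ) : Q.simpleToInj l ≠ 0 :=
  LinearMap.ne_zero_of_injective (Q.simpleToInj_injective l)

instance finite_P (l : Λ) : Module.Finite S (Q.P l) := by
  obtain ⟨x, hx⟩ := exists_ne (0 : Q.L l)
  obtain ⟨y, rfl⟩ := Q.projToSimple_surjective l x
  refine Module.Finite.of_surjective (LinearMap.toSpanSingleton S _ y)
    (Q.surjective_of_projToSimple_comp_ne_zero fun h => hx ?_)
  simpa using LinearMap.congr_fun h 1

/-- `L(l)` is a composition factor of `M`, expressed by a nonzero map `P(l) → M`. -/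
def HasFactor (l : Λ) (M : Type) [AddCommGroup M] [Module S M] : Prop :=
  ∃ u : Q.P l →ₗ[S] M, u ≠ 0

variable {Q}

theorem HasFactor.of_injective (h : Q.HasFactor l M) {f : M →ₗ[S] N} (hf : Injective f) :
    Q.HasFactor l N := by
  obtain ⟨u, hu⟩ := h
  exact ⟨f ∘ₗ u, fun h0 => hu ((LinearMap.cancel_left hf).1 (by rw [h0, LinearMap.comp_zero]))⟩

theorem HasFactor.of_surjective (h : Q.HasFactor l N) {f : M →ₗ[S] N} (hf : Surjective f) :
    Q.HasFactor l M := by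
  obtain ⟨u, hu⟩ := h
  obtain ⟨v, rfl⟩ := Module.projective_lifting_property f u hf
  exact ⟨v, fun h0 => hu (by rw [h0, LinearMap.comp_zero])⟩

theorem HasFactor.of_isShortExact (h : Q.HasFactor l B) {f : A →ₗ[S] B} {g : B →ₗ[S] C}
    (hfg : IsShortExact f g) : Q.HasFactor l A ∨ Q.HasFactor l C := by
  obtain ⟨u, hu⟩ := h
  by_cases hgu : g ∘ₗ u = 0
  · obtain ⟨v, rfl⟩ := hfg.exists_lift hgu
    exact .inl ⟨v, fun h0 => hu (by rw [h0, LinearMap.comp_zero])⟩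
  · exact .inr ⟨_, hgu⟩

theorem hasFactor_of_surjective {f : M →ₗ[S] Q.L l} (hf : Surjective f) : Q.HasFactor l M :=
  HasFactor.of_surjective ⟨_, Q.projToSimple_ne_zero l⟩ hf

variable (Q)

theorem isCompFactor_iff {M : ModuleCat.{0} S} :
    IsCompFactor S (Q.L l) M ↔ Q.HasFactor l M := by
  constructor
  · rintro ⟨A, B, -, he⟩
    obtain ⟨v, hv, -⟩ := (nonempty_subquot_equiv_iff A B).1 he
    exact (hasFactor_of_surjective hv).of_injective B.injective_subtype
  · rintro ⟨u, hu⟩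
    obtain ⟨v, hv⟩ := (isShortExact_ker u.surjective_rangeRestrict).exists_desc
      (u := Q.projToSimple l) (LinearMap.ext fun x =>
        Q.projToSimple_apply_eq_zero hu (congrArg Subtype.val (LinearMap.mem_ker.1 x.2)))
    have hsurj : Surjective v := by
      refine Surjective.of_comp (g := u.rangeRestrict) ?_
      rw [← LinearMap.coe_comp, hv]
      exact Q.projToSimple_surjective l
    refine ⟨(LinearMap.ker v).map (Submodule.subtype _), LinearMap.range u,
      Submodule.map_subtype_le _ _, (nonempty_subquot_equiv_iff _ _).2 ⟨v, hsurj, ?_⟩⟩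
    rw [Submodule.comap_map_eq_of_injective (Submodule.injective_subtype _)]

theorem hasFactor_L_iff : Q.HasFactor m (Q.L l) ↔ m = l := by
  constructor
  · rintro ⟨u, hu⟩
    by_contra hne
    obtain ⟨v, hv⟩ := (isShortExact_ker (LinearMap.surjective_of_ne_zero hu)).exists_desc
      (u := Q.projToSimple m)
      (LinearMap.ext fun x => Q.projToSimple_apply_eq_zero hu (LinearMap.mem_ker.1 x.2))
    have hv0 : v ≠ 0 := by
      rintro rfl
      exact Q.projToSimple_ne_zero m (hv.symm.trans (LinearMap.zero_comp _))
    exact (Q.nonisoL l m (Ne.symm hne)).false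
      (LinearEquiv.ofBijective v (LinearMap.bijective_of_ne_zero hv0))
  · rintro rfl
    exact ⟨_, Q.projToSimple_ne_zero m⟩

theorem isFilteredBy_L (hM : IsFiniteLength S M) :
    IsFilteredBy Q.L {l | Q.HasFactor l M} (ModuleCat.of S M) := by
  induction hM with
  | of_subsingleton => exact .zero _ ‹_›
  | @of_simple_quotient M _ _ N hN _ ih =>
    obtain ⟨l, ⟨e⟩⟩ := Q.fullL (ModuleCat.of S (M ⧸ N)) hN
    have he : Surjective (e.toLinearMap ∘ₗ N.mkQ) := e.surjective.comp N.mkQ_surjective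
    refine .extend (A := ModuleCat.of S N) (i := l) (f := N.subtype) (g := e.toLinearMap ∘ₗ N.mkQ)
      (hasFactor_of_surjective he) ⟨N.injective_subtype, ?_, he⟩
      (ih.mono fun l hl => HasFactor.of_injective hl N.injective_subtype)
    rw [LinearMap.exact_iff, LinearEquiv.ker_comp, Submodule.ker_mkQ, Submodule.range_subtype]

theorem exists_surjective_L [Module.Finite S M] [Nontrivial M] :
    ∃ (l : Λ) (f : M →ₗ[S] Q.L l), Surjective f := by
  obtain ⟨N, hN, -⟩ := (eq_top_or_exists_le_coatom (⊥ : Submodule S M)).resolve_left bot_ne_top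
  obtain ⟨l, ⟨e⟩⟩ := Q.fullL (ModuleCat.of S (M ⧸ N)) (isSimpleModule_iff_isCoatom.2 hN)
  exact ⟨l, e.toLinearMap ∘ₗ N.mkQ, e.surjective.comp N.mkQ_surjective⟩

theorem exists_injective_L [IsArtinian S M] [Nontrivial M] :
    ∃ (l : Λ) (f : Q.L l →ₗ[S] M), Injective f := by
  obtain ⟨N, hN, -⟩ := (eq_bot_or_exists_atom_le (⊤ : Submodule S M)).resolve_left top_ne_bot
  obtain ⟨l, ⟨e⟩⟩ := Q.fullL (ModuleCat.of S N) (isSimpleModule_iff_isAtom.2 hN)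
  exact ⟨l, N.subtype ∘ₗ e.symm.toLinearMap, N.injective_subtype.comp e.symm.injective⟩

section Multiplicity

variable {M : ModuleCat.{0} S} {n : ℕ} {F : Fin (n + 1) → Submodule S M} {i j : Fin n}

theorem range_le_castSucc (hF : F j.castSucc ≤ F j.succ)
    (hsimple : IsSimpleModule S (subquot S (F j.castSucc) (F j.succ)))
    (hj : ¬ Nonempty (subquot S (F j.castSucc) (F j.succ) ≃ₗ[S] Q.L l))
    {u : Q.P l →ₗ[S] M} (hu : LinearMap.range u ≤ F j.succ) :
    LinearMap.range u ≤ F j.castSucc := by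
  obtain ⟨m, ⟨e⟩⟩ := Q.fullL (ModuleCat.of S _) hsimple
  obtain ⟨g, hg⟩ := exists_isShortExact_of_subquot hF e
  have hml : ¬ Q.HasFactor l (Q.L m) := by
    rw [hasFactor_L_iff]
    rintro rfl
    exact hj ⟨e⟩
  obtain ⟨v, hv⟩ := hg.exists_lift (u := u.codRestrict _ fun x => hu ⟨x, rfl⟩)
    (by_contra fun h => hml ⟨_, h⟩)
  rintro _ ⟨x, rfl⟩
  have hx : v x = u x := congrArg Subtype.val (LinearMap.congr_fun hv x)
  exact hx ▸ (v x).2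

theorem range_le_of_forall_ne (hF : Monotone F)
    (hsimple : ∀ j : Fin n, IsSimpleModule S (subquot S (F j.castSucc) (F j.succ)))
    (hi : ∀ j, i ≠ j → ¬ Nonempty (subquot S (F j.castSucc) (F j.succ) ≃ₗ[S] Q.L l))
    {u : Q.P l →ₗ[S] M} {a b : Fin (n + 1)}
    (hab : ∀ j : Fin n, a ≤ j.castSucc → j.castSucc < b → i ≠ j)
    (hu : LinearMap.range u ≤ F b) : LinearMap.range u ≤ F a := by
  induction b using Fin.induction with
  | zero => exact hu.trans (hF (Fin.zero_le a))
  | succ j ih =>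
    by_cases haj : a ≤ j.castSucc
    · exact ih (fun k hk hkj => hab k hk (hkj.trans j.castSucc_lt_succ))
        (Q.range_le_castSucc (hF j.castSucc_le_succ) (hsimple j)
          (hi j (hab j haj j.castSucc_lt_succ)) hu)
    · exact hu.trans (hF (Fin.castSucc_lt_iff_succ_le.1 (not_le.1 haj)))

theorem exists_unique_section (h : CompFactorMult S (Q.L l) M 1) :
    ∃ (B : Submodule S M) (v : B →ₗ[S] Q.L l), Surjective v ∧
      (∀ u : Q.P l →ₗ[S] M, LinearMap.range u ≤ B) ∧
      ∀ w : Q.P l →ₗ[S] B, v ∘ₗ w = 0 → w = 0 := by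
  obtain ⟨n, F, hF, hbot, htop, hsimple, hcard⟩ := h
  obtain ⟨hsub, ⟨⟨i, ⟨e⟩⟩⟩⟩ := Nat.card_eq_one_iff_unique.1 hcard
  have hi (j : Fin n) (hij : i ≠ j) :
      ¬ Nonempty (subquot S (F j.castSucc) (F j.succ) ≃ₗ[S] Q.L l) :=
    fun hj => hij (congrArg Subtype.val (hsub.elim ⟨i, ⟨e⟩⟩ ⟨j, hj⟩))
  obtain ⟨v, hv⟩ := exists_isShortExact_of_subquot (hF i.castSucc_le_succ) e
  refine ⟨F i.succ, v, hv.surjective, fun u => ?_, fun w hw => ?_⟩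
  · refine Q.range_le_of_forall_ne hF hsimple hi (b := Fin.last n)
      (fun j hj _ => ?_) (htop ▸ le_top)
    rintro rfl
    exact (i.castSucc_lt_succ).not_ge hj
  · obtain ⟨w', rfl⟩ := hv.exists_lift hw
    have hzero : LinearMap.range ((F i.castSucc).subtype ∘ₗ w') ≤ F 0 := by
      refine Q.range_le_of_forall_ne hF hsimple hi (b := i.castSucc) (fun j _ hj => ?_) ?_
      · rintro rfl
        exact hj.false
      · rintro _ ⟨x, rfl⟩
        exact (w' x).2
    rw [hbot, le_bot_iff, LinearMap.range_eq_bot] at hzero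
    ext x
    exact LinearMap.congr_fun hzero x

theorem exists_comp_eq_of_compFactorMult_one (h : CompFactorMult S (Q.L l) M 1)
    {w : Q.P l →ₗ[S] M} (hw : w ≠ 0) (u : Q.P l →ₗ[S] M) : ∃ a, w ∘ₗ a = u := by
  obtain ⟨B, v, -, hB, hker⟩ := Q.exists_unique_section h
  let w' := w.codRestrict B fun x => hB w ⟨x, rfl⟩
  let u' := u.codRestrict B fun x => hB u ⟨x, rfl⟩
  have hw' : v ∘ₗ w' ≠ 0 := fun h0 =>
    hw (LinearMap.ext fun x => congrArg Subtype.val (LinearMap.congr_fun (hker w' h0) x))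
  obtain ⟨a, ha⟩ := Module.projective_lifting_property (v ∘ₗ w') (v ∘ₗ u')
    (LinearMap.surjective_of_ne_zero hw')
  have heq : w' ∘ₗ a - u' = 0 :=
    hker _ (by rw [LinearMap.comp_sub, ← LinearMap.comp_assoc, ha, sub_self])
  exact ⟨a, LinearMap.ext fun x =>
    congrArg Subtype.val (LinearMap.congr_fun (sub_eq_zero.1 heq) x)⟩

theorem hasFactor_of_compFactorMult_one (h : CompFactorMult S (Q.L l) M 1) :
    Q.HasFactor l M := by
  obtain ⟨B, v, hv, -⟩ := Q.exists_unique_section h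
  exact (hasFactor_of_surjective hv).of_injective B.injective_subtype

end Multiplicity

end QHData

end SimpleModules

section StandardModules

variable {S : Type} [Ring S] {Λ : Type} [Fintype Λ] [PartialOrder Λ] (Q : QHData S Λ)
  {M X : Type} [AddCommGroup M] [Module S M] [AddCommGroup X] [Module S X] {l m : Λ}

namespace QHData

theorem exists_projToStd (l : Λ) : ∃ q : Q.P l →ₗ[S] Q.std l, Surjective q ∧
    (∀ m, Q.HasFactor m (Q.std l) → m ≤ l) ∧
    ∀ {M : Type} [AddCommGroup M] [Module S M], (∀ m, Q.HasFactor m M → m ≤ l) →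
      ∀ f : Q.P l →ₗ[S] M, ∃ g : Q.std l →ₗ[S] M, g ∘ₗ q = f := by
  obtain ⟨K, ⟨e⟩, hK, hmin⟩ := Q.stdSpec l
  have hq : Surjective (e.symm.toLinearMap ∘ₗ K.mkQ) := e.symm.surjective.comp K.mkQ_surjective
  refine ⟨_, hq, fun m hm => hK m (Q.isCompFactor_iff.2 (hm.of_injective e.injective)),
    fun hM f => ?_⟩
  have hker : K ≤ LinearMap.ker f := hmin _ fun m hm => hM m <|
    HasFactor.of_injective (f := (LinearMap.ker f).liftQ f le_rfl) (Q.isCompFactor_iff.1 hm)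
      (LinearMap.ker_eq_bot.1 (Submodule.ker_liftQ_eq_bot _ _ _ le_rfl))
  refine ⟨K.liftQ f hker ∘ₗ e.toLinearMap, ?_⟩
  ext x
  simp

/-- The quotient map `P(l) → Δ(l)`. -/
noncomputable def projToStd (l : Λ) : Q.P l →ₗ[S] Q.std l := (Q.exists_projToStd l).choose

theorem projToStd_surjective (l : Λ) : Surjective (Q.projToStd l) :=
  (Q.exists_projToStd l).choose_spec.1

variable {Q} in
theorem HasFactor.le_of_std (h : Q.HasFactor m (Q.std l)) : m ≤ l :=
  (Q.exists_projToStd l).choose_spec.2.1 m h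

theorem exists_comp_projToStd_eq (hM : ∀ m, Q.HasFactor m M → m ≤ l) (f : Q.P l →ₗ[S] M) :
    ∃ g : Q.std l →ₗ[S] M, g ∘ₗ Q.projToStd l = f :=
  (Q.exists_projToStd l).choose_spec.2.2 hM f

instance finite_std (l : Λ) : Module.Finite S (Q.std l) :=
  .of_surjective _ (Q.projToStd_surjective l)

theorem hasFactor_of_std {u : Q.std l →ₗ[S] M} (hu : u ≠ 0) : Q.HasFactor l M :=
  ⟨u ∘ₗ Q.projToStd l, fun h =>
    hu ((LinearMap.cancel_right (Q.projToStd_surjective l)).1 (by rw [h, LinearMap.zero_comp]))⟩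

theorem projToStd_ne_zero (l : Λ) : Q.projToStd l ≠ 0 := by
  intro h
  obtain ⟨u, hu⟩ := Q.hasFactor_of_compFactorMult_one (Q.multOne l)
  obtain ⟨v, rfl⟩ := Module.projective_lifting_property _ u (Q.projToStd_surjective l)
  exact hu (by rw [h, LinearMap.zero_comp])

theorem exists_stdToSimple (l : Λ) :
    ∃ p : Q.std l →ₗ[S] Q.L l, p ∘ₗ Q.projToStd l = Q.projToSimple l :=
  Q.exists_comp_projToStd_eq (fun _ hm => (Q.hasFactor_L_iff.1 hm).le) _

/-- The head `Δ(l) → L(l)` of a standard module. -/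
noncomputable def stdToSimple (l : Λ) : Q.std l →ₗ[S] Q.L l := (Q.exists_stdToSimple l).choose

theorem stdToSimple_comp_projToStd (l : Λ) :
    Q.stdToSimple l ∘ₗ Q.projToStd l = Q.projToSimple l :=
  (Q.exists_stdToSimple l).choose_spec

theorem stdToSimple_surjective (l : Λ) : Surjective (Q.stdToSimple l) := by
  refine Surjective.of_comp (g := Q.projToStd l) ?_
  rw [← LinearMap.coe_comp, stdToSimple_comp_projToStd]
  exact Q.projToSimple_surjective l

instance nontrivial_std (l : Λ) : Nontrivial (Q.std l) := (Q.stdToSimple_surjective l).nontrivial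

theorem surjective_of_stdToSimple_comp_ne_zero {u : M →ₗ[S] Q.std l}
    (hu : Q.stdToSimple l ∘ₗ u ≠ 0) : Surjective u := by
  obtain ⟨w, hw⟩ := Module.projective_lifting_property (Q.stdToSimple l ∘ₗ u) (Q.projToSimple l)
    (LinearMap.surjective_of_ne_zero hu)
  obtain ⟨a, ha⟩ := Module.projective_lifting_property (Q.projToStd l) (u ∘ₗ w)
    (Q.projToStd_surjective l)
  have hsurj : Surjective a := Q.surjective_of_projToSimple_comp_ne_zero <| by
    rw [← stdToSimple_comp_projToStd, LinearMap.comp_assoc, ha, ← LinearMap.comp_assoc, hw]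
    exact Q.projToSimple_ne_zero l
  have huw : Surjective (u ∘ₗ w) := ha ▸ (Q.projToStd_surjective l).comp hsurj
  exact Surjective.of_comp huw

theorem not_hasFactor_ker_stdToSimple (l : Λ) :
    ¬ Q.HasFactor l (LinearMap.ker (Q.stdToSimple l)) := by
  rintro ⟨w, hw⟩
  obtain ⟨a, ha⟩ := Q.exists_comp_eq_of_compFactorMult_one (Q.multOne l)
    (w := (LinearMap.ker (Q.stdToSimple l)).subtype ∘ₗ w)
    (fun h => hw ((LinearMap.cancel_left (Submodule.injective_subtype _)).1
      (by rw [h, LinearMap.comp_zero]))) (Q.projToStd l)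
  refine Q.projToSimple_ne_zero l ?_
  rw [← stdToSimple_comp_projToStd, ← ha]
  ext x
  exact (w (a x)).2

theorem HasFactor.lt_of_ker_stdToSimple (h : Q.HasFactor m (LinearMap.ker (Q.stdToSimple l))) :
    m < l :=
  lt_of_le_of_ne (h.of_injective (Submodule.injective_subtype _)).le_of_std fun hml =>
    Q.not_hasFactor_ker_stdToSimple l (hml ▸ h)

theorem exists_costdToInj (l : Λ) : ∃ j : Q.costd l →ₗ[S] Q.I l, Injective j ∧
    (∀ m, Q.HasFactor m (Q.costd l) → m ≤ l) ∧
    ∀ {M : Type} [AddCommGroup M] [Module S M], (∀ m, Q.HasFactor m M → m ≤ l) →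
      ∀ f : M →ₗ[S] Q.I l, ∃ g : M →ₗ[S] Q.costd l, j ∘ₗ g = f := by
  obtain ⟨V, ⟨e⟩, hV, hmax⟩ := Q.costdSpec l
  refine ⟨V.subtype ∘ₗ e.toLinearMap, V.injective_subtype.comp e.injective,
    fun m hm => hV m (Q.isCompFactor_iff.2 (hm.of_injective e.injective)), fun hM f => ?_⟩
  have hrange : LinearMap.range f ≤ V := hmax _ fun m hm => hM m <|
    HasFactor.of_surjective (Q.isCompFactor_iff.1 hm) f.surjective_rangeRestrict
  refine ⟨e.symm.toLinearMap ∘ₗ f.codRestrict V fun x => hrange ⟨x, rfl⟩, ?_⟩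
  ext x
  simp

/-- The inclusion `∇(l) → I(l)`. -/
noncomputable def costdToInj (l : Λ) : Q.costd l →ₗ[S] Q.I l := (Q.exists_costdToInj l).choose

theorem costdToInj_injective (l : Λ) : Injective (Q.costdToInj l) :=
  (Q.exists_costdToInj l).choose_spec.1

variable {Q} in
theorem HasFactor.le_of_costd (h : Q.HasFactor m (Q.costd l)) : m ≤ l :=
  (Q.exists_costdToInj l).choose_spec.2.1 m h

theorem exists_costdToInj_comp_eq (hM : ∀ m, Q.HasFactor m M → m ≤ l) (f : M →ₗ[S] Q.I l) :
    ∃ g : M →ₗ[S] Q.costd l, Q.costdToInj l ∘ₗ g = f :=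
  (Q.exists_costdToInj l).choose_spec.2.2 hM f

theorem exists_simpleToCostd (l : Λ) :
    ∃ s : Q.L l →ₗ[S] Q.costd l, Q.costdToInj l ∘ₗ s = Q.simpleToInj l :=
  Q.exists_costdToInj_comp_eq (fun _ hm => (Q.hasFactor_L_iff.1 hm).le) _

/-- The socle `L(l) → ∇(l)` of a costandard module. -/
noncomputable def simpleToCostd (l : Λ) : Q.L l →ₗ[S] Q.costd l :=
  (Q.exists_simpleToCostd l).choose

theorem costdToInj_comp_simpleToCostd (l : Λ) :
    Q.costdToInj l ∘ₗ Q.simpleToCostd l = Q.simpleToInj l :=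
  (Q.exists_simpleToCostd l).choose_spec

theorem simpleToCostd_injective (l : Λ) : Injective (Q.simpleToCostd l) := by
  refine Injective.of_comp (f := Q.costdToInj l) ?_
  rw [← LinearMap.coe_comp, costdToInj_comp_simpleToCostd]
  exact Q.simpleToInj_injective l

instance nontrivial_costd (l : Λ) : Nontrivial (Q.costd l) :=
  (Q.simpleToCostd_injective l).nontrivial

theorem injective_of_comp_simpleToCostd_ne_zero {u : Q.costd l →ₗ[S] M}
    (hu : u ∘ₗ Q.simpleToCostd l ≠ 0) : Injective u := by
  obtain ⟨w, hw⟩ := Module.Injective.out (u ∘ₗ Q.simpleToCostd l)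
    (LinearMap.injective_of_ne_zero hu) (Q.simpleToInj l)
  obtain ⟨a, ha⟩ := Module.Injective.out (Q.costdToInj l) (Q.costdToInj_injective l) (w ∘ₗ u)
  have hinj : Injective a := Q.injective_of_comp_simpleToInj_ne_zero fun h =>
    Q.simpleToInj_ne_zero l <| LinearMap.ext fun x => by
      rw [← hw]
      refine (ha _).symm.trans ?_
      rw [← LinearMap.comp_apply (Q.costdToInj l), costdToInj_comp_simpleToCostd]
      exact LinearMap.congr_fun h x
  have hwu : Injective (w ∘ₗ u) := fun x y hxy =>
    Q.costdToInj_injective l (hinj (by rw [ha, ha, hxy]))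
  exact Injective.of_comp hwu

theorem range_simpleToCostd_le {u : M →ₗ[S] Q.costd l} (hu : u ≠ 0) :
    LinearMap.range (Q.simpleToCostd l) ≤ LinearMap.range u := by
  by_contra hle
  have hinj := Q.injective_of_comp_simpleToCostd_ne_zero (u := (LinearMap.range u).mkQ) fun h =>
    hle (by rwa [← Submodule.ker_mkQ (LinearMap.range u), LinearMap.range_le_ker_iff])
  rw [← LinearMap.ker_eq_bot, Submodule.ker_mkQ, LinearMap.range_eq_bot] at hinj
  exact hu hinj

theorem hasFactor_of_costd {u : M →ₗ[S] Q.costd l} (hu : u ≠ 0) : Q.HasFactor l M := by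
  have hle := Q.range_simpleToCostd_le hu
  have hL : Q.HasFactor l (LinearMap.range u) :=
    HasFactor.of_injective (Q.hasFactor_L_iff.2 rfl)
      (f := (Q.simpleToCostd l).codRestrict (LinearMap.range u) fun x => hle ⟨x, rfl⟩)
      fun x y hxy => Q.simpleToCostd_injective l (congrArg Subtype.val hxy)
  exact hL.of_surjective u.surjective_rangeRestrict

theorem range_le_range_simpleToCostd (u : Q.P l →ₗ[S] Q.costd l) :
    LinearMap.range u ≤ LinearMap.range (Q.simpleToCostd l) := by
  obtain ⟨v, rfl⟩ := Q.exists_comp_projToStd_eq (fun _ => HasFactor.le_of_costd) u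
  have hv : v ∘ₗ (LinearMap.ker (Q.stdToSimple l)).subtype = 0 := by
    by_contra h
    exact Q.not_hasFactor_ker_stdToSimple l (Q.hasFactor_of_costd h)
  obtain ⟨w, rfl⟩ := (isShortExact_ker (Q.stdToSimple_surjective l)).exists_desc hv
  by_cases hw : w = 0
  · simp [hw]
  obtain ⟨y, hy⟩ := exists_ne (0 : Q.L l)
  obtain ⟨z, hz⟩ := Q.range_simpleToCostd_le hw ⟨y, rfl⟩
  have hcomap : (LinearMap.range (Q.simpleToCostd l)).comap w = ⊤ := by
    refine (eq_bot_or_eq_top _).resolve_left fun hbot => hy (Q.simpleToCostd_injective l ?_)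
    have hmem : z ∈ (LinearMap.range (Q.simpleToCostd l)).comap w := ⟨y, hz.symm⟩
    rw [hbot, Submodule.mem_bot] at hmem
    rw [← hz, hmem, map_zero, map_zero]
  rintro _ ⟨x, rfl⟩
  have hmem : Q.stdToSimple l (Q.projToStd l x) ∈
      (LinearMap.range (Q.simpleToCostd l)).comap w := hcomap ▸ Submodule.mem_top
  exact hmem

theorem not_hasFactor_costd_quotient (l : Λ) :
    ¬ Q.HasFactor l (Q.costd l ⧸ LinearMap.range (Q.simpleToCostd l)) := by
  rintro ⟨u, hu⟩
  obtain ⟨v, rfl⟩ := Module.projective_lifting_property _ u (Submodule.mkQ_surjective _)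
  refine hu (LinearMap.range_le_ker_iff.1 ?_)
  rw [Submodule.ker_mkQ]
  exact Q.range_le_range_simpleToCostd v

theorem HasFactor.lt_of_costd_quotient
    (h : Q.HasFactor m (Q.costd l ⧸ LinearMap.range (Q.simpleToCostd l))) : m < l :=
  lt_of_le_of_ne (h.of_surjective (Submodule.mkQ_surjective _)).le_of_costd fun hml =>
    Q.not_hasFactor_costd_quotient l (hml ▸ h)

theorem std_hom_costd_eq_zero (hlm : l ≠ m) (u : Q.std l →ₗ[S] Q.costd m) : u = 0 := by
  by_contra hu
  exact hlm (le_antisymm (Q.hasFactor_of_std hu).le_of_costd (Q.hasFactor_of_costd hu).le_of_std)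

theorem simpleToCostd_comp_stdToSimple_ne_zero (l : Λ) :
    Q.simpleToCostd l ∘ₗ Q.stdToSimple l ≠ 0 := by
  intro h
  obtain ⟨y, hy⟩ := exists_ne (0 : Q.L l)
  obtain ⟨x, rfl⟩ := Q.stdToSimple_surjective l y
  exact hy (Q.simpleToCostd_injective l ((LinearMap.congr_fun h x).trans (map_zero _).symm))

theorem exists_surjective_ker_isFilteredBy (l : Λ) : ∃ q : Q.P l →ₗ[S] Q.std l, Surjective q ∧
    IsFilteredBy Q.std (Set.Ioi l) (ModuleCat.of S (LinearMap.ker q)) := by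
  obtain ⟨n, F, g, hF, hg, hcard⟩ := Q.projFilt l
  obtain ⟨hsub, ⟨⟨i, hi⟩⟩⟩ := Nat.card_eq_one_iff_unique.1 hcard
  obtain ⟨n, rfl⟩ : ∃ n', n = n' + 1 := Nat.exists_eq_succ_of_ne_zero i.pos.ne'
  obtain ⟨u, hu⟩ := exists_isShortExact_of_subquot (hF.1 (Fin.last n).castSucc_le_succ)
    (hF.2.2.2 (Fin.last n)).some
  have htop (x : Q.P l) : x ∈ F (Fin.last n).succ :=
    (hF.2.2.1 : F (Fin.last n).succ = ⊤) ▸ Submodule.mem_top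
  let q : Q.P l →ₗ[S] Q.std (g (Fin.last n)) := u ∘ₗ LinearMap.id.codRestrict _ htop
  have hq : Surjective q := fun y => by
    obtain ⟨x, rfl⟩ := hu.surjective y
    exact ⟨x, rfl⟩
  have hker : LinearMap.ker q = F (Fin.last n).castSucc := by
    ext x
    exact (hu.exact ⟨x, htop x⟩).trans
      ⟨fun ⟨y, hy⟩ => (show (y : Q.P l) = x from congrArg Subtype.val hy) ▸ y.2,
        fun hx => ⟨⟨x, hx⟩, rfl⟩⟩
  have hlast : l = g (Fin.last n) := Q.hasFactor_L_iff.1 ⟨Q.stdToSimple _ ∘ₗ q,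
    LinearMap.ne_zero_of_surjective ((Q.stdToSimple_surjective _).comp hq)⟩
  have hfilt : IsFilteredBy Q.std (Set.Ioi l) (ModuleCat.of S (LinearMap.ker q)) := by
    rw [hker]
    refine hF.isFilteredBy_apply _ fun j hj => lt_of_le_of_ne (hg j) fun h => hj.ne ?_
    exact congrArg (Fin.castSucc ∘ Subtype.val) (hsub.elim ⟨j, h.symm⟩ ⟨_, hlast.symm⟩)
  have hex : ∃ q : Q.P l →ₗ[S] Q.std (g (Fin.last n)), Surjective q ∧
    IsFilteredBy Q.std (Set.Ioi l) (ModuleCat.of S (LinearMap.ker q)) := ⟨q, hq, hfilt⟩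
  rwa [← hlast] at hex

end QHData

end StandardModules

section Orthogonality

variable {S : Type} [Ring S] {Λ : Type} [Fintype Λ] [PartialOrder Λ] (Q : QHData S Λ)
  {M X : Type} [AddCommGroup M] [Module S M] [AddCommGroup X] [Module S X] {l m : Λ}

namespace QHData

theorem extVanishes_std_of_forall_not_lt (h : ∀ m, Q.HasFactor m M → ¬ l < m) :
    ExtVanishes S (Q.std l) M 1 := by
  obtain ⟨q, hq, hker⟩ := Q.exists_surjective_ker_isFilteredBy l
  refine (isShortExact_ker hq).extVanishes_quotient_left
    (hker.extVanishes_left fun m hm => extVanishes_zero_iff.2 fun u => ?_) (.of_projective 0)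
  by_contra hu
  exact h m (Q.hasFactor_of_std hu) hm

theorem hom_inj_quotient_eq_zero (h : ∀ l, Q.HasFactor l M → l ≤ m)
    (u : M →ₗ[S] Q.I m ⧸ LinearMap.range (Q.costdToInj m)) : u = 0 := by
  have hI := isShortExact_mkQ_range (Q.costdToInj_injective m)
  obtain ⟨a, b, hab, hb⟩ := hI.exists_ker_comp (isShortExact_subtype_mkQ (LinearMap.range u))
  have hfac (l : Λ) (hl : Q.HasFactor l (LinearMap.ker
      ((LinearMap.range u).mkQ ∘ₗ (LinearMap.range (Q.costdToInj m)).mkQ))) : l ≤ m :=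
    (hl.of_isShortExact hab).elim HasFactor.le_of_costd fun hl =>
      h l (hl.of_surjective u.surjective_rangeRestrict)
  obtain ⟨v, hv⟩ := Q.exists_costdToInj_comp_eq hfac (Submodule.subtype _)
  have hb0 : (LinearMap.range u).subtype ∘ₗ b = 0 := by
    rw [hb, ← hv, ← LinearMap.comp_assoc, hI.exact.linearMap_comp_eq_zero, LinearMap.zero_comp]
  ext x
  obtain ⟨y, hy⟩ := hab.surjective ⟨u x, x, rfl⟩
  exact (congrArg Subtype.val hy).symm.trans (LinearMap.congr_fun hb0 y)

theorem extVanishes_costd_of_forall_le (h : ∀ l, Q.HasFactor l M → l ≤ m) :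
    ExtVanishes S M (Q.costd m) 1 :=
  (isShortExact_mkQ_range (Q.costdToInj_injective m)).extVanishes_sub_right
    (extVanishes_zero_iff.2 (Q.hom_inj_quotient_eq_zero h)) (.of_injective 0)

theorem extVanishes_std_costd (l m : Λ) (n : ℕ) :
    ExtVanishes S (Q.std l) (Q.costd m) (n + 1) := by
  induction n generalizing l with
  | zero =>
    by_cases hlm : l < m
    · exact Q.extVanishes_costd_of_forall_le fun i hi => hi.le_of_std.trans hlm.le
    · exact Q.extVanishes_std_of_forall_not_lt fun i hi hli => hlm (hli.trans_le hi.le_of_costd)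
  | succ n ih =>
    obtain ⟨q, hq, hker⟩ := Q.exists_surjective_ker_isFilteredBy l
    exact (isShortExact_ker hq).extVanishes_quotient_left
      (hker.extVanishes_left fun i _ => ih i) (.of_projective (n + 1))

end QHData

end Orthogonality

section FiltrationCriteria

/-- Every finitely generated module embeds in a finitely generated injective module. -/
class EnoughFiniteInjectives (S : Type) [Ring S] : Prop where
  exists_injective (M : Type) [AddCommGroup M] [Module S M] [Module.Finite S M] :
    ∃ (J : ModuleCat.{0} S) (f : M →ₗ[S] J),
      Module.Finite S J ∧ Module.Injective S J ∧ Injective f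

theorem isFiniteLength_of_finite {S M : Type} [Ring S] [IsArtinianRing S] [AddCommGroup M]
    [Module S M] [Module.Finite S M] : IsFiniteLength S M :=
  isFiniteLength_iff_isNoetherian_isArtinian.2 ⟨inferInstance, inferInstance⟩

variable {S : Type} [Ring S] [IsArtinianRing S] {Λ : Type} [Fintype Λ] [PartialOrder Λ]
  (Q : QHData S Λ) {M X : Type} [AddCommGroup M] [Module S M] [AddCommGroup X] [Module S X]
  {l m : Λ}

namespace QHData

theorem extVanishes_left_of_forall_factor [Module.Finite S M] {n : ℕ}
    (h : ∀ l, Q.HasFactor l M → ExtVanishes S (Q.L l) X n) : ExtVanishes S M X n :=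
  (Q.isFilteredBy_L isFiniteLength_of_finite).extVanishes_left h

theorem extVanishes_right_of_forall_factor [Module.Finite S M] {n : ℕ}
    (h : ∀ l, Q.HasFactor l M → ExtVanishes S X (Q.L l) n) : ExtVanishes S X M n :=
  (Q.isFilteredBy_L isFiniteLength_of_finite).extVanishes_right h

theorem extVanishes_L_left (h : ∀ i < m, ExtVanishes S (Q.L i) X 0)
    (hm : ExtVanishes S (Q.std m) X 1) : ExtVanishes S (Q.L m) X 1 :=
  (isShortExact_ker (Q.stdToSimple_surjective m)).extVanishes_quotient_left
    (Q.extVanishes_left_of_forall_factor fun i hi => h i hi.lt_of_ker_stdToSimple) hm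

variable [EnoughFiniteInjectives S]

instance finite_I (l : Λ) : Module.Finite S (Q.I l) := by
  obtain ⟨J, f, _, hJ, hf⟩ := EnoughFiniteInjectives.exists_injective (S := S) (Q.L l)
  obtain ⟨u, hu⟩ := hJ.out (Q.simpleToInj l) (Q.simpleToInj_injective l) f
  refine Module.Finite.of_injective u (Q.injective_of_comp_simpleToInj_ne_zero fun h => ?_)
  exact LinearMap.ne_zero_of_injective hf
    (LinearMap.ext fun x => (hu x).symm.trans (LinearMap.congr_fun h x))

instance finite_costd (l : Λ) : Module.Finite S (Q.costd l) :=
  .of_injective _ (Q.costdToInj_injective l)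

theorem extVanishes_L_right (h : ∀ i < m, ExtVanishes S X (Q.L i) 0)
    (hm : ExtVanishes S X (Q.costd m) 1) : ExtVanishes S X (Q.L m) 1 :=
  (isShortExact_mkQ_range (Q.simpleToCostd_injective m)).extVanishes_sub_right
    (Q.extVanishes_right_of_forall_factor fun i hi => h i hi.lt_of_costd_quotient) hm

theorem exists_injective_costd [Module.Finite S X] [Nontrivial X]
    (h : ∀ l, ExtVanishes S (Q.std l) X 1) : ∃ (l : Λ) (u : Q.costd l →ₗ[S] X), Injective u := by
  obtain ⟨l, ⟨w, hw⟩, hmin⟩ := wellFounded_lt.has_min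
    {l | ∃ w : Q.L l →ₗ[S] X, w ≠ 0} ((Q.exists_injective_L (M := X)).imp fun _ ⟨w, hw⟩ =>
      ⟨w, LinearMap.ne_zero_of_injective hw⟩)
  have hhom (m : Λ) (hm : m < l) : ExtVanishes S (Q.L m) X 0 :=
    extVanishes_zero_iff.2 fun u => by_contra fun hu => hmin m ⟨u, hu⟩ hm
  have hext : ExtVanishes S (Q.costd l ⧸ LinearMap.range (Q.simpleToCostd l)) X 1 :=
    Q.extVanishes_left_of_forall_factor fun m hm =>
      Q.extVanishes_L_left (fun i hi => hhom i (hi.trans hm.lt_of_costd_quotient)) (h m)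
  obtain ⟨u, rfl⟩ := (isShortExact_mkQ_range
    (Q.simpleToCostd_injective l)).exists_extend_of_extVanishes_one hext w
  exact ⟨l, u, Q.injective_of_comp_simpleToCostd_ne_zero hw⟩

theorem exists_surjective_std [Module.Finite S X] [Nontrivial X]
    (h : ∀ l, ExtVanishes S X (Q.costd l) 1) : ∃ (l : Λ) (u : X →ₗ[S] Q.std l), Surjective u := by
  obtain ⟨l, ⟨w, hw⟩, hmin⟩ := wellFounded_lt.has_min
    {l | ∃ w : X →ₗ[S] Q.L l, w ≠ 0} ((Q.exists_surjective_L (M := X)).imp fun _ ⟨w, hw⟩ =>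
      ⟨w, LinearMap.ne_zero_of_surjective hw⟩)
  have hhom (m : Λ) (hm : m < l) : ExtVanishes S X (Q.L m) 0 :=
    extVanishes_zero_iff.2 fun u => by_contra fun hu => hmin m ⟨u, hu⟩ hm
  have hext : ExtVanishes S X (LinearMap.ker (Q.stdToSimple l)) 1 :=
    Q.extVanishes_right_of_forall_factor fun m hm =>
      Q.extVanishes_L_right (fun i hi => hhom i (hi.trans hm.lt_of_ker_stdToSimple)) (h m)
  obtain ⟨u, rfl⟩ := (isShortExact_ker
    (Q.stdToSimple_surjective l)).exists_comp_eq_of_extVanishes_one hext w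
  exact ⟨l, u, Q.surjective_of_stdToSimple_comp_ne_zero hw⟩

theorem isFilteredBy_costd_of_extVanishes (X : ModuleCat.{0} S) [Module.Finite S X]
    (h : ∀ l, ExtVanishes S (Q.std l) X 1) : IsFilteredBy Q.costd Set.univ X := by
  induction hn : Module.length S X using WellFoundedLT.induction generalizing X with
  | ind n ih =>
    subst hn
    cases subsingleton_or_nontrivial X with
    | inl hX => exact .zero X hX
    | inr hX =>
      obtain ⟨l, u, hu⟩ := Q.exists_injective_costd h
      have hne : LinearMap.range u ≠ ⊥ :=
        LinearMap.range_eq_bot.not.2 (LinearMap.ne_zero_of_injective hu)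
      refine .of_isShortExact (isShortExact_mkQ_range hu) (.single (Set.mem_univ l))
        (ih _ (Submodule.length_quotient_lt _ hne) (ModuleCat.of S _) (fun m => ?_) rfl)
      exact (isShortExact_mkQ_range hu).extVanishes_quotient_right (h m)
        (Q.extVanishes_std_costd m l 1)

theorem isFilteredBy_std_of_extVanishes (X : ModuleCat.{0} S) [Module.Finite S X]
    (h : ∀ l, ExtVanishes S X (Q.costd l) 1) : IsFilteredBy Q.std Set.univ X := by
  induction hn : Module.length S X using WellFoundedLT.induction generalizing X with
  | ind n ih =>
    subst hn
    cases subsingleton_or_nontrivial X with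
    | inl hX => exact .zero X hX
    | inr hX =>
      obtain ⟨l, u, hu⟩ := Q.exists_surjective_std h
      have hne : LinearMap.ker u ≠ ⊤ :=
        LinearMap.ker_eq_top.not.2 (LinearMap.ne_zero_of_surjective hu)
      refine .extend (Set.mem_univ l) (isShortExact_ker hu)
        (ih _ (Submodule.length_lt hne) (ModuleCat.of S _) (fun m => ?_) rfl)
      exact (isShortExact_ker hu).extVanishes_sub_left (h m) (Q.extVanishes_std_costd l m 1)

end QHData

end FiltrationCriteria

section Resolution

variable {S : Type} [Ring S] {A B C X Y : Type}
  [AddCommGroup A] [Module S A] [AddCommGroup B] [Module S B] [AddCommGroup C] [Module S C]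
  [AddCommGroup X] [Module S X] [AddCommGroup Y] [Module S Y]

/-- The vanishing of `Ext^i_S(M, N)` for all `i > d`. -/
def ExtVanishesAbove (S : Type) [Ring S] (M N : Type) [AddCommGroup M] [Module S M]
    [AddCommGroup N] [Module S N] (d : ℕ) : Prop :=
  ∀ i, d < i → ExtVanishes S M N i

theorem ExtVanishesAbove.of_projective [Module.Projective S X] : ExtVanishesAbove S X Y 0
  | n + 1, _ => .of_projective n

theorem ExtVanishesAbove.of_injective [Module.Injective S Y] : ExtVanishesAbove S X Y 0
  | n + 1, _ => .of_injective n

theorem ExtVanishesAbove.congr_left {d : ℕ} (h : ExtVanishesAbove S X Y d) (e : X ≃ₗ[S] A) :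
    ExtVanishesAbove S A Y d :=
  fun i hi => (h i hi).congr_left e.symm

theorem ExtVanishesAbove.congr_right {d : ℕ} (h : ExtVanishesAbove S X Y d) (e : Y ≃ₗ[S] A) :
    ExtVanishesAbove S X A d :=
  fun i hi => (h i hi).congr_right e.symm

namespace IsShortExact

variable {f : A →ₗ[S] B} {g : B →ₗ[S] C}

theorem extVanishesAbove_quotient_left_iff (h : IsShortExact f g)
    (hB : ExtVanishesAbove S B X 0) {d : ℕ} :
    ExtVanishesAbove S C X (d + 1) ↔ ExtVanishesAbove S A X d := by
  constructor
  · intro hC i hi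
    exact h.extVanishes_sub_left (hB i (by omega)) (hC (i + 1) (by omega))
  · rintro hA (_ | i) hi
    · omega
    · exact h.extVanishes_quotient_left (hA i (by omega)) (hB (i + 1) (by omega))

theorem extVanishesAbove_sub_right_iff (h : IsShortExact f g)
    (hB : ExtVanishesAbove S X B 0) {d : ℕ} :
    ExtVanishesAbove S X A (d + 1) ↔ ExtVanishesAbove S X C d := by
  constructor
  · intro hA i hi
    exact h.extVanishes_quotient_right (hB i (by omega)) (hA (i + 1) (by omega))
  · rintro hC (_ | i) hi
    · omega
    · exact h.extVanishes_sub_right (hC i (by omega)) (hB (i + 1) (by omega))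

end IsShortExact

namespace IsExactSeq

variable {d : ℕ} {N : Fin (d + 2) → ModuleCat.{0} S}
  {f : ∀ i : Fin (d + 1), N i.castSucc →ₗ[S] N i.succ}

theorem isShortExact (h : IsExactSeq S d N f) (j : Fin d) :
    IsShortExact (LinearMap.range (f j.castSucc)).subtype (f j.succ).rangeRestrict where
  injective := Submodule.injective_subtype _
  exact := by
    rw [LinearMap.exact_iff, LinearMap.ker_rangeRestrict, Submodule.range_subtype]
    exact (h.2.2 j).symm
  surjective := LinearMap.surjective_rangeRestrict _

theorem cons (h : IsExactSeq S d N f) {A C : ModuleCat.{0} S} {a : A →ₗ[S] C}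
    {b : C →ₗ[S] N (Fin.castSucc 0)} (hab : IsShortExact a b) :
    IsExactSeq S (d + 1) (Fin.cons A (Fin.cons C (Fin.tail N)))
      (Fin.cases a (Fin.cases (f 0 ∘ₗ b) fun i => f i.succ)) := by
  refine ⟨hab.injective, ?_, Fin.cases ?_ ?_⟩
  · cases d with
    | zero => exact h.2.1.comp hab.surjective
    | succ d => exact h.2.1
  · exact (LinearMap.exact_iff.1 hab.exact).symm.trans
      (LinearMap.ker_comp_of_ker_eq_bot b (LinearMap.ker_eq_bot.2 h.1)).symm
  · cases d with
    | zero => exact fun i => i.elim0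
    | succ d =>
      exact Fin.cases ((LinearMap.range_comp_of_range_eq_top (f 0)
        (LinearMap.range_eq_top.2 hab.surjective)).trans (h.2.2 0)) fun i => h.2.2 i.succ

theorem const (X : ModuleCat.{0} S) : IsExactSeq S 0 (fun _ => X) fun _ => LinearMap.id :=
  ⟨injective_id, surjective_id, fun i => i.elim0⟩

theorem extVanishesAbove_left (h : IsExactSeq S d N f)
    (hN : ∀ i : Fin (d + 1), ExtVanishesAbove S (N i.castSucc) Y 0) :
    ExtVanishesAbove S (N (Fin.last (d + 1))) Y d := by
  have hrange (j : Fin (d + 1)) : ExtVanishesAbove S (LinearMap.range (f j)) Y j := by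
    induction j using Fin.induction with
    | zero => exact (hN 0).congr_left (LinearEquiv.ofInjective (f 0) h.1)
    | succ j ih => exact ((h.isShortExact j).extVanishesAbove_quotient_left_iff (hN j.succ)).2 ih
  exact (hrange (Fin.last d)).congr_left (.ofTop _ (LinearMap.range_eq_top.2 h.2.1))

theorem extVanishesAbove_right (h : IsExactSeq S d N f)
    (hN : ∀ i : Fin (d + 1), ExtVanishesAbove S X (N i.succ) 0) :
    ExtVanishesAbove S X (N 0) d := by
  have hrange (j : Fin (d + 1)) (e : ℕ) (he : d = j + e) :
      ExtVanishesAbove S X (LinearMap.range (f j)) e := by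
    induction j using Fin.reverseInduction generalizing e with
    | last =>
      obtain rfl : e = 0 := by simpa using he
      exact (hN (Fin.last d)).congr_right
        (LinearEquiv.ofTop _ (LinearMap.range_eq_top.2 h.2.1)).symm
    | cast j ih =>
      obtain ⟨e, rfl⟩ : ∃ e', e = e' + 1 := ⟨e - 1, by have := j.2; simp at he; omega⟩
      exact ((h.isShortExact j).extVanishesAbove_sub_right_iff (hN j.castSucc)).2
        (ih e (by simp at he ⊢; omega))
  exact (hrange 0 d (by simp)).congr_right (LinearEquiv.ofInjective (f 0) h.1).symm

end IsExactSeq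

variable {ι : Type*}

/-- The class `P` of modules resolves the class `Cl` from the left, and a module of `Cl` belongs
to `P` if and only if it is left orthogonal to the modules `D j`. -/
structure IsLeftAdapted (Cl P : ModuleCat.{0} S → Prop) (D : ι → ModuleCat.{0} S) : Prop where
  acyclic {X : ModuleCat.{0} S} (hX : P X) (j : ι) : ExtVanishesAbove S X (D j) 0
  mem {X : ModuleCat.{0} S} (hX : Cl X) (h : ∀ j, ExtVanishes S X (D j) 1) : P X
  exists_cover {X : ModuleCat.{0} S} (hX : Cl X) :
    ∃ (K C : ModuleCat.{0} S) (a : K →ₗ[S] C) (b : C →ₗ[S] X), IsShortExact a b ∧ P C ∧ Cl K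

/-- The class `P` of modules resolves the class `Cl` from the right, and a module of `Cl` belongs
to `P` if and only if it is right orthogonal to the modules `D j`. -/
structure IsRightAdapted (Cl P : ModuleCat.{0} S → Prop) (D : ι → ModuleCat.{0} S) : Prop where
  acyclic {X : ModuleCat.{0} S} (hX : P X) (j : ι) : ExtVanishesAbove S (D j) X 0
  mem {X : ModuleCat.{0} S} (hX : Cl X) (h : ∀ j, ExtVanishes S (D j) X 1) : P X
  exists_envelope {X : ModuleCat.{0} S} (hX : Cl X) :
    ∃ (C K : ModuleCat.{0} S) (a : X →ₗ[S] C) (b : C →ₗ[S] K), IsShortExact a b ∧ P C ∧ Cl K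

variable {Cl P : ModuleCat.{0} S → Prop} {D : ι → ModuleCat.{0} S} {M : ModuleCat.{0} S} {d : ℕ}

theorem IsLeftAdapted.exists_isExactSeq_of_add (h : IsLeftAdapted Cl P D) (hM : Cl M) {e : ℕ}
    (hd : ∀ j, ExtVanishesAbove S M (D j) (d + e)) :
    ∃ (N : Fin (d + 2) → ModuleCat.{0} S) (f : ∀ i : Fin (d + 1), N i.castSucc →ₗ[S] N i.succ),
      IsExactSeq S d N f ∧ N (Fin.last (d + 1)) = M ∧ (∀ i : Fin d, P (N i.succ.castSucc)) ∧
        Cl (N 0) ∧ ∀ j, ExtVanishesAbove S (N 0) (D j) e := by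
  induction d generalizing e with
  | zero => exact ⟨_, _, .const M, rfl, fun i => i.elim0, hM, by simpa using hd⟩
  | succ d ih =>
    obtain ⟨N, f, hf, hlast, hP, hCl, hN⟩ := ih (e := e + 1) (by convert hd using 2; omega)
    obtain ⟨K, C, a, b, hab, hC, hK⟩ := h.exists_cover hCl
    exact ⟨_, _, hf.cons hab, hlast, Fin.cases hC hP, hK, fun j =>
      (hab.extVanishesAbove_quotient_left_iff (h.acyclic hC j)).1 (hN j)⟩

theorem IsLeftAdapted.exists_isExactSeq_iff (h : IsLeftAdapted Cl P D) (hM : Cl M) :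
    (∃ (N : Fin (d + 2) → ModuleCat.{0} S) (f : ∀ i : Fin (d + 1), N i.castSucc →ₗ[S] N i.succ),
      IsExactSeq S d N f ∧ N (Fin.last (d + 1)) = M ∧ ∀ i : Fin (d + 1), P (N i.castSucc)) ↔
      ∀ j, ExtVanishesAbove S M (D j) d := by
  constructor
  · rintro ⟨N, f, hf, rfl, hN⟩ j
    exact hf.extVanishesAbove_left fun i => h.acyclic (hN i) j
  · intro hd
    obtain ⟨N, f, hf, hlast, hP, hCl, hN⟩ := h.exists_isExactSeq_of_add (e := 0) hM hd
    exact ⟨N, f, hf, hlast, Fin.cases (h.mem hCl fun j => hN j 1 one_pos) hP⟩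

theorem IsRightAdapted.exists_isExactSeq (h : IsRightAdapted Cl P D) (hM : Cl M)
    (hd : ∀ j, ExtVanishesAbove S (D j) M d) :
    ∃ (N : Fin (d + 2) → ModuleCat.{0} S) (f : ∀ i : Fin (d + 1), N i.castSucc →ₗ[S] N i.succ),
      IsExactSeq S d N f ∧ N 0 = M ∧ ∀ i : Fin (d + 1), P (N i.succ) := by
  induction d generalizing M with
  | zero => exact ⟨_, _, .const M, rfl, fun _ => h.mem hM fun j => hd j 1 one_pos⟩
  | succ d ih =>
    obtain ⟨C, K, a, b, hab, hC, hK⟩ := h.exists_envelope hM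
    obtain ⟨N, f, hf, rfl, hP⟩ := ih hK fun j =>
      (hab.extVanishesAbove_sub_right_iff (h.acyclic hC j)).1 (hd j)
    exact ⟨_, _, hf.cons hab, rfl, Fin.cases hC hP⟩

theorem IsRightAdapted.exists_isExactSeq_iff (h : IsRightAdapted Cl P D) (hM : Cl M) :
    (∃ (N : Fin (d + 2) → ModuleCat.{0} S) (f : ∀ i : Fin (d + 1), N i.castSucc →ₗ[S] N i.succ),
      IsExactSeq S d N f ∧ N 0 = M ∧ ∀ i : Fin (d + 1), P (N i.succ)) ↔
      ∀ j, ExtVanishesAbove S (D j) M d := by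
  refine ⟨?_, h.exists_isExactSeq hM⟩
  rintro ⟨N, f, hf, rfl, hN⟩ j
  exact hf.extVanishesAbove_right fun i => h.acyclic (hN i) j

end Resolution

section Dimensions

variable {S : Type} [Ring S] {M : ModuleCat.{0} S} {d : ℕ}

theorem projdimLE_iff :
    ProjdimLE S M d ↔ ∀ N : ModuleCat.{0} S, ExtVanishesAbove S M N d :=
  IsLeftAdapted.exists_isExactSeq_iff (Cl := fun _ => True) (P := fun X => Module.Projective S X)
    { acyclic := fun _ _ => .of_projective
      mem := fun _ h => projective_of_extVanishes fun N _ _ => h (ModuleCat.of S N)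
      exists_cover := fun {X} _ => ⟨ModuleCat.of S _, ModuleCat.of S (X →₀ S), _, _,
        isShortExact_ker (Finsupp.linearCombination_id_surjective S X), .of_free, trivial⟩ }
    trivial

theorem exists_injective_module (X : ModuleCat.{0} S) :
    ∃ (J : ModuleCat.{0} S) (f : X →ₗ[S] J), Module.Injective S J ∧ Injective f := by
  obtain ⟨J, hJ, f, _⟩ := (EnoughInjectives.presentation X).some
  exact ⟨J, f.hom, (Module.injective_iff_injective_object S J).2 hJ,
    (ModuleCat.mono_iff_injective f).1 ‹_›⟩

theorem injdimLE_iff :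
    InjdimLE S M d ↔ ∀ N : ModuleCat.{0} S, ExtVanishesAbove S N M d :=
  IsRightAdapted.exists_isExactSeq_iff (Cl := fun _ => True) (P := fun X => Module.Injective S X)
    { acyclic := fun _ _ => .of_injective
      mem := fun _ h => injective_of_extVanishes fun N _ _ => h (ModuleCat.of S N)
      exists_envelope := fun {X} _ =>
        have ⟨J, _, hJ, hf⟩ := exists_injective_module X
        ⟨J, ModuleCat.of S _, _, _, isShortExact_mkQ_range hf, hJ, trivial⟩ }
    trivial

variable {Λ : Type} [Fintype Λ] [PartialOrder Λ] {Q : QHData S Λ}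

theorem inStdFilt_iff : InStdFilt S Q M ↔ IsFilteredBy Q.std Set.univ M :=
  ⟨fun ⟨_, _, _, h⟩ => h.isFilteredBy, fun h => h.exists_hasFiltrationWithSections⟩

theorem inCostdFilt_iff : InCostdFilt S Q M ↔ IsFilteredBy Q.costd Set.univ M :=
  ⟨fun ⟨_, _, _, h⟩ => h.isFilteredBy, fun h => h.exists_hasFiltrationWithSections⟩

variable [IsArtinianRing S] [EnoughFiniteInjectives S]

theorem wfdLE_iff [Module.Finite S M] :
    WfdLE S Q M d ↔ ∀ l, ExtVanishesAbove S M (Q.costd l) d :=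
  IsLeftAdapted.exists_isExactSeq_iff (Cl := fun X => Module.Finite S X) (P := InStdFilt S Q)
    { acyclic := fun hX l => fun
        | n + 1, _ => (inStdFilt_iff.1 hX).extVanishes_left fun m _ => Q.extVanishes_std_costd m l n
      mem := fun _ h => inStdFilt_iff.2 (Q.isFilteredBy_std_of_extVanishes _ h)
      exists_cover := fun {X} _ =>
        have ⟨n, g, hg⟩ := Module.Finite.exists_fin' S X
        ⟨ModuleCat.of S _, ModuleCat.of S (Fin n → S), _, _, isShortExact_ker hg,
          inStdFilt_iff.2 (Q.isFilteredBy_std_of_extVanishes _ fun _ => .of_projective 0),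
          inferInstance⟩ }
    ‹_›

theorem gfdLE_iff [Module.Finite S M] :
    GfdLE S Q M d ↔ ∀ l, ExtVanishesAbove S (Q.std l) M d :=
  IsRightAdapted.exists_isExactSeq_iff (Cl := fun X => Module.Finite S X) (P := InCostdFilt S Q)
    { acyclic := fun hX l => fun
        | n + 1, _ =>
          (inCostdFilt_iff.1 hX).extVanishes_right fun m _ => Q.extVanishes_std_costd l m n
      mem := fun _ h => inCostdFilt_iff.2 (Q.isFilteredBy_costd_of_extVanishes _ h)
      exists_envelope := fun {X} _ =>
        have ⟨J, _, _, _, hf⟩ := EnoughFiniteInjectives.exists_injective (S := S) X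
        ⟨J, ModuleCat.of S _, _, _, isShortExact_mkQ_range hf,
          inCostdFilt_iff.2 (Q.isFilteredBy_costd_of_extVanishes _ fun _ => .of_injective 0),
          inferInstanceAs (Module.Finite S (J ⧸ _))⟩ }
    ‹_›

end Dimensions

section Approximation

variable {S : Type} [Ring S] {Λ : Type} [Fintype Λ] [PartialOrder Λ] (Q : QHData S Λ)

namespace QHData

theorem exists_isIdempotentElem_hasFactor_iff (l : Λ) :
    ∃ e : S, IsIdempotentElem e ∧ ∀ (N : Type) [AddCommGroup N] [Module S N],
      Q.HasFactor l N ↔ ∃ n : N, e • n ≠ 0 := by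
  obtain ⟨p, hp⟩ := DFunLike.ne_iff.1 (Q.projToSimple_ne_zero l)
  have hr : Surjective (LinearMap.toSpanSingleton S (Q.P l) p) :=
    Q.surjective_of_projToSimple_comp_ne_zero fun h => hp (by simpa using LinearMap.congr_fun h 1)
  obtain ⟨i, hi⟩ := Module.projective_lifting_property _ LinearMap.id hr
  have hip : i p • p = p := LinearMap.congr_fun hi p
  refine ⟨i p, (map_smul i (i p) p).symm.trans (congrArg i hip), fun N _ _ => ⟨?_, ?_⟩⟩
  · rintro ⟨u, hu⟩
    refine ⟨u p, fun h => hu ?_⟩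
    rw [← map_smul, hip] at h
    ext x
    obtain ⟨s, rfl⟩ := hr x
    simp [h]
  · rintro ⟨n, hn⟩
    exact ⟨LinearMap.toSpanSingleton S N n ∘ₗ i, fun h => hn (LinearMap.congr_fun h p)⟩

end QHData

/-- A monomorphism along which all maps to costandard modules extend. Between modules of `F(Δ)`
these are the monomorphisms with cokernel in `F(Δ)`. -/
structure IsCostdMono {X M : Type} [AddCommGroup X] [Module S X] [AddCommGroup M] [Module S M]
    (j : X →ₗ[S] M) : Prop where
  injective : Injective j
  exists_extend (m : Λ) (u : X →ₗ[S] Q.costd m) : ∃ v : M →ₗ[S] Q.costd m, v ∘ₗ j = u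

variable {Q} {A B C M N X : Type} [AddCommGroup A] [Module S A] [AddCommGroup B] [Module S B]
  [AddCommGroup C] [Module S C] [AddCommGroup M] [Module S M] [AddCommGroup N] [Module S N]
  [AddCommGroup X] [Module S X]

theorem IsShortExact.isCostdMono {f : A →ₗ[S] B} {g : B →ₗ[S] C} (h : IsShortExact f g)
    (hC : ∀ m, ExtVanishes S C (Q.costd m) 1) : IsCostdMono Q f :=
  ⟨h.injective, fun m u => h.exists_extend_of_extVanishes_one (hC m) u⟩

namespace IsCostdMono

theorem comp {i : M →ₗ[S] N} {j : X →ₗ[S] M} (hi : IsCostdMono Q i) (hj : IsCostdMono Q j) :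
    IsCostdMono Q (i ∘ₗ j) where
  injective := hi.injective.comp hj.injective
  exists_extend m u := by
    obtain ⟨v, rfl⟩ := hj.exists_extend m u
    obtain ⟨w, rfl⟩ := hi.exists_extend m v
    exact ⟨w, rfl⟩

theorem of_comp_eq_id {j : X →ₗ[S] M} {r : M →ₗ[S] X} (h : r ∘ₗ j = LinearMap.id) :
    IsCostdMono Q j where
  injective := LinearMap.injective_of_comp_eq_id j r h
  exists_extend m u := ⟨u ∘ₗ r, by rw [LinearMap.comp_assoc, h, LinearMap.comp_id]⟩

theorem exists_prod {f : A →ₗ[S] X} {g : X →ₗ[S] C} (h : IsShortExact f g) {i : A →ₗ[S] M}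
    (hi : IsCostdMono Q i) {j : C →ₗ[S] N} (hj : IsCostdMono Q j) (hC : ExtVanishes S C M 1) :
    ∃ k : X →ₗ[S] N × M, IsCostdMono Q k := by
  obtain ⟨i', rfl⟩ := h.exists_extend_of_extVanishes_one hC i
  refine ⟨(j ∘ₗ g).prod i', (injective_iff_map_eq_zero _).2 fun x hx => ?_, fun m u => ?_⟩
  · obtain ⟨hjx, hix⟩ := Prod.ext_iff.1 hx
    obtain ⟨a, rfl⟩ := (h.exact x).1 ((map_eq_zero_iff j hj.injective).1 hjx)
    rw [(map_eq_zero_iff (i' ∘ₗ f) hi.injective).1 hix, map_zero]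
  · obtain ⟨v, hv⟩ := hi.exists_extend m (u ∘ₗ f)
    obtain ⟨w, hw⟩ := h.exists_desc (u := u - v ∘ₗ i') (by
      rw [LinearMap.sub_comp, LinearMap.comp_assoc, hv, sub_self])
    obtain ⟨w', rfl⟩ := hj.exists_extend m w
    refine ⟨w'.coprod v, ?_⟩
    rw [LinearMap.coprod_comp_prod, ← LinearMap.comp_assoc, hw, sub_add_cancel]

end IsCostdMono

namespace IsFilteredBy

variable {s : Set Λ} {M : ModuleCat.{0} S} {m : Λ}

theorem extVanishes_costd (h : IsFilteredBy Q.std s M) (m : Λ) (n : ℕ) :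
    ExtVanishes S M (Q.costd m) (n + 1) :=
  h.extVanishes_left fun l _ => Q.extVanishes_std_costd l m n

theorem extVanishes_std (h : IsFilteredBy Q.costd s M) (m : Λ) (n : ℕ) :
    ExtVanishes S (Q.std m) M (n + 1) :=
  h.extVanishes_right fun l _ => Q.extVanishes_std_costd m l n

theorem of_std_of_hom_costd (h : IsFilteredBy Q.std s M) :
    IsFilteredBy Q.std {m | m ∈ s ∧ ∃ u : M →ₗ[S] Q.costd m, u ≠ 0} M := by
  induction h with
  | zero M h => exact .zero _ h
  | @extend A M i hi f g h _ ih =>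
    refine .extend ⟨hi, _, fun h0 => Q.simpleToCostd_comp_stdToSimple_ne_zero i
      ((LinearMap.cancel_right h.surjective).1 (h0.trans (LinearMap.zero_comp g).symm))⟩ h
      (ih.mono ?_)
    rintro m ⟨hm, w, hw⟩
    obtain ⟨v, rfl⟩ := h.exists_extend_of_extVanishes_one (Q.extVanishes_std_costd i m 0) w
    exact ⟨hm, v, fun h0 => hw (by rw [h0, LinearMap.zero_comp])⟩

theorem of_costd_of_hom_std (h : IsFilteredBy Q.costd s M) :
    IsFilteredBy Q.costd {m | m ∈ s ∧ ∃ u : Q.std m →ₗ[S] M, u ≠ 0} M := by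
  induction h with
  | zero M h => exact .zero _ h
  | @extend A M i hi f g h hA ih =>
    obtain ⟨w, hw⟩ := h.exists_comp_eq_of_extVanishes_one (hA.extVanishes_std i 0)
      (Q.simpleToCostd i ∘ₗ Q.stdToSimple i)
    refine .extend ⟨hi, w, fun h0 => Q.simpleToCostd_comp_stdToSimple_ne_zero i
      (by rw [← hw, h0, LinearMap.comp_zero])⟩ h (ih.mono ?_)
    rintro m ⟨hm, u, hu⟩
    exact ⟨hm, f ∘ₗ u, fun h0 => hu
      ((LinearMap.cancel_left h.injective).1 (h0.trans (LinearMap.comp_zero f).symm))⟩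

theorem exists_isCostdMono_std (h : IsFilteredBy Q.std (Set.Iic m) M)
    (hm : ∃ u : M →ₗ[S] Q.costd m, u ≠ 0) : ∃ j : Q.std m →ₗ[S] M, IsCostdMono Q j := by
  induction h with
  | zero M h =>
    obtain ⟨u, hu⟩ := hm
    exact absurd (Subsingleton.elim u 0) hu
  | @extend A M i hi f g h hA ih =>
    have hf : IsCostdMono Q f := h.isCostdMono fun m => Q.extVanishes_std_costd i m 0
    by_cases hA0 : ∃ u : A →ₗ[S] Q.costd m, u ≠ 0
    · obtain ⟨j, hj⟩ := ih hA0
      exact ⟨_, hf.comp hj⟩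
    · push Not at hA0
      obtain ⟨u, hu⟩ := hm
      obtain ⟨v, rfl⟩ := h.exists_desc (hA0 (u ∘ₗ f))
      obtain rfl : i = m := by
        by_contra hne
        exact hu (by rw [Q.std_hom_costd_eq_zero hne v, LinearMap.zero_comp])
      have hext : ExtVanishes S (Q.std i) A 1 := hA.extVanishes_right fun l hl =>
        Q.extVanishes_std_of_forall_not_lt fun k hk hik => hik.not_ge (hk.le_of_std.trans hl)
      obtain ⟨j, hj⟩ := h.exists_comp_eq_of_extVanishes_one hext LinearMap.id
      exact ⟨j, .of_comp_eq_id hj⟩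

theorem exists_isCostdMono_pow {T X : ModuleCat.{0} S} (hT : IsFilteredBy Q.costd Set.univ T)
    (hstd : ∀ l, ∃ j : Q.std l →ₗ[S] T, IsCostdMono Q j) (hX : IsFilteredBy Q.std s X) :
    ∃ (n : ℕ) (i : X →ₗ[S] (Fin n → T)), IsCostdMono Q i := by
  induction hX with
  | zero X h => exact ⟨0, 0, .of_comp_eq_id (r := 0) (Subsingleton.elim _ _)⟩
  | @extend A X l _ f g h _ ih =>
    obtain ⟨n, i, hi⟩ := ih
    obtain ⟨j, hj⟩ := hstd l
    obtain ⟨k, hk⟩ := IsCostdMono.exists_prod h hi hj ((hT.pow n).extVanishes_std l 0)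
    let e := Fin.consLinearEquiv S fun _ : Fin (n + 1) => T
    exact ⟨n + 1, _, (IsCostdMono.of_comp_eq_id e.symm_comp).comp hk⟩

end IsFilteredBy

theorem IsCostdMono.isFilteredBy_quotient [IsArtinianRing S] [EnoughFiniteInjectives S]
    {M : ModuleCat.{0} S} {j : X →ₗ[S] M} (hj : IsCostdMono Q j)
    (hM : IsFilteredBy Q.std Set.univ M) :
    IsFilteredBy Q.std Set.univ (ModuleCat.of S (M ⧸ LinearMap.range j)) :=
  have := hM.finite Q.finite_std
  Q.isFilteredBy_std_of_extVanishes _ fun m =>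
    (isShortExact_mkQ_range hj.injective).extVanishes_one_of_exists_extend
      (hM.extVanishes_costd m 0) (hj.exists_extend m)

section Tilting

variable {T : ModuleCat.{0} S} {Q' : QHData (RingelDualRing S T) Λᵒᵈ}

theorem exists_isIdempotentElem_end
    (hQ' : ∀ m, Nonempty (Q'.std (.toDual m) ≃ₗ[RingelDualRing S T] (T →ₗ[S] Q.costd m)))
    (l : Λ) : ∃ e : Module.End S T, IsIdempotentElem e ∧
      ∀ m, Q'.HasFactor (.toDual l) (Q'.std (.toDual m)) ↔
        ∃ t : T →ₗ[S] Q.costd m, t ∘ₗ e ≠ 0 := by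
  obtain ⟨e, he, hfactor⟩ := Q'.exists_isIdempotentElem_hasFactor_iff (.toDual l)
  refine ⟨e.unop, congrArg MulOpposite.unop he, fun m => (hfactor _).trans ?_⟩
  obtain ⟨ε⟩ := hQ' m
  rw [ε.symm.surjective.exists]
  refine exists_congr fun t => not_congr ?_
  rw [← map_smul, LinearEquiv.map_eq_zero_iff]
  rfl

theorem exists_isCostdMono_std_tilting [IsArtinianRing S] [EnoughFiniteInjectives S]
    (hT : IsFilteredBy Q.std Set.univ T)
    (hQ' : ∀ m, Nonempty (Q'.std (.toDual m) ≃ₗ[RingelDualRing S T] (T →ₗ[S] Q.costd m)))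
    (l : Λ) : ∃ j : Q.std l →ₗ[S] T, IsCostdMono Q j := by
  obtain ⟨e, he, hfactor⟩ := exists_isIdempotentElem_end hQ' l
  let i := (LinearMap.range e).subtype
  let r := e.rangeRestrict
  have hri : r ∘ₗ i = LinearMap.id := by
    ext ⟨_, x, rfl⟩
    exact LinearMap.congr_fun he x
  have := hT.finite Q.finite_std
  have hrange : IsFilteredBy Q.std Set.univ (ModuleCat.of S (LinearMap.range e)) :=
    Q.isFilteredBy_std_of_extVanishes _ fun m => (hT.extVanishes_costd m 0).retract_left hri
  have hle : IsFilteredBy Q.std (Set.Iic l) (ModuleCat.of S (LinearMap.range e)) := by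
    refine hrange.of_std_of_hom_costd.mono ?_
    rintro m ⟨-, u, hu⟩
    refine ((hfactor m).2 ⟨u ∘ₗ r, fun h0 => hu ?_⟩).le_of_std
    have : r ∘ₗ e = r := by
      ext x
      exact LinearMap.congr_fun he x
    rw [LinearMap.comp_assoc, this] at h0
    rw [← LinearMap.comp_id u, ← hri, ← LinearMap.comp_assoc, h0, LinearMap.zero_comp]
  obtain ⟨t, ht⟩ := (hfactor l).1 ⟨_, Q'.projToStd_ne_zero _⟩
  obtain ⟨j, hj⟩ := hle.exists_isCostdMono_std ⟨t ∘ₗ i, fun h0 => ht <| by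
    ext x
    exact LinearMap.congr_fun h0 (r x)⟩
  exact ⟨i ∘ₗ j, (IsCostdMono.of_comp_eq_id hri).comp hj⟩

end Tilting

end Approximation

section FiniteDimensional

variable (k : Type) {S : Type} [Field k] [Ring S] [Algebra k S]

theorem injective_coextendScalars (V : ModuleCat.{0} k) :
    Module.Injective S ((ModuleCat.coextendScalars (algebraMap k S)).obj V) :=
  have := Module.injective_of_isSemisimpleRing k V
  have := Module.injective_object_of_injective_module k V
  Module.injective_module_of_injective_object S _
    (inj := Injective.injective_of_adjoint (ModuleCat.restrictCoextendScalarsAdj _) V)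

theorem finite_coextendScalars [Module.Finite k S] (V : ModuleCat.{0} k) [Module.Finite k V] :
    Module.Finite S ((ModuleCat.coextendScalars (algebraMap k S)).obj V) := by
  let S₀ := (ModuleCat.restrictScalars (algebraMap k S)).obj (ModuleCat.of S S)
  have : IsScalarTower k S (S₀ →ₗ[k] V) := ⟨fun c s g => LinearMap.ext fun x : S => by
    change g (x * c • s : S) = _
    rw [mul_smul_comm, Algebra.smul_def]
    exact map_smul g c _⟩
  have : Module.Finite k S₀ := .equiv (M := S)
    { AddEquiv.refl S with map_smul' := fun c s => Algebra.smul_def c s }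
  have : Module.Finite S (S₀ →ₗ[k] V) := .of_restrictScalars_finite k S _
  exact .equiv (ModuleCat.CoextendScalars.equiv (algebraMap k S) V).symm

theorem enoughFiniteInjectives_of_finite [Module.Finite k S] : EnoughFiniteInjectives S where
  exists_injective M _ _ _ := by
    let f := algebraMap k S
    let M₀ := (ModuleCat.restrictScalars f).obj (ModuleCat.of S M)
    let η := (ModuleCat.restrictCoextendScalarsAdj f).unit.app (ModuleCat.of S M)
    have : Module.Finite k M₀ := by
      let : Module k M := Module.compHom M f
      have : IsScalarTower k S M := .of_algebraMap_smul fun _ _ => rfl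
      have : Module.Finite k M := .trans S M
      exact this
    refine ⟨_, η.hom, finite_coextendScalars k M₀, injective_coextendScalars k M₀,
      fun x y hxy => ?_⟩
    have h1 : (1 : S) • x = (1 : S) • y := LinearMap.congr_fun
      (congrArg (ModuleCat.CoextendScalars.equiv f M₀) hxy) (1 : S)
    simpa only [one_smul] using h1

end FiniteDimensional

section LComp

variable {k S A B C M : Type} [Ring k] [Ring S] [AddCommGroup A] [Module S A] [AddCommGroup B]
  [Module S B] [AddCommGroup C] [Module S C] [AddCommGroup M] [Module S M] [Module k M]
  [SMulCommClass S k M]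

theorem IsShortExact.lcomp {f : A →ₗ[S] B} {g : B →ₗ[S] C} (h : IsShortExact f g)
    (hext : ∀ u : A →ₗ[S] M, ∃ v, v ∘ₗ f = u) :
    IsShortExact (g.lcomp k M) (f.lcomp k M) where
  injective _ _ huv := (LinearMap.cancel_right h.surjective).1 huv
  exact u := ⟨h.exists_desc, by
    rintro ⟨v, rfl⟩
    exact (LinearMap.comp_assoc ..).trans
      ((congrArg (v ∘ₗ ·) h.exact.linearMap_comp_eq_zero).trans (LinearMap.comp_zero v))⟩
  surjective := hext

theorem comp_eq_sum_single_proj {n : ℕ} {T : Type} [AddCommGroup T] [Module S T]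
    (v : (Fin n → T) →ₗ[S] M) (w : A →ₗ[S] (Fin n → T)) :
    v ∘ₗ w = ∑ j, (v ∘ₗ LinearMap.single S (fun _ => T) j) ∘ₗ LinearMap.proj j ∘ₗ w := by
  ext x
  simp only [LinearMap.sum_apply, LinearMap.comp_apply, LinearMap.proj_apply,
    LinearMap.single_apply, ← map_sum, Finset.univ_sum_single]

end LComp

section HomDual

variable (k : Type) {S : Type} [Field k] [Ring S] [Algebra k S]
  (T : ModuleCat.{0} S) [Module k T] [IsScalarTower k S T]
  {X Y Z M : Type} [AddCommGroup X] [Module S X] [AddCommGroup Y] [Module S Y]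
  [AddCommGroup Z] [Module S Z] [AddCommGroup M] [Module S M]

/-- The value `D Hom_S(X, T)` at `X` of the functor comparing modules over `S` with modules over
its Ringel dual; it agrees with the Ringel duality functor up to twisting by a duality. -/
abbrev DualHom (X : Type) [AddCommGroup X] [Module S X] : Type := Module.Dual k (X →ₗ[S] T)

namespace DualHom

instance : Module (RingelDualRing S T) (DualHom k T X) :=
  inferInstanceAs (Module (Module.End S T)ᵈᵐᵃ (DualHom k T X))

variable {k T}

instance : IsScalarTower k (RingelDualRing S T) (DualHom k T X) :=
  ⟨fun a b φ => LinearMap.ext fun h => φ.map_smul a (b.unop ∘ₗ h)⟩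

instance {M : ModuleCat.{0} S} [Module k M] [IsScalarTower k S M] :
    IsScalarTower k (RingelDualRing S T) (T →ₗ[S] M) :=
  ⟨fun c a t => LinearMap.ext fun x => (t.restrictScalars k).map_smul c (a.unop x)⟩

variable (k T)

/-- The action of the functor `D Hom_S(-, T)` on a homomorphism. -/
def map (f : X →ₗ[S] Y) : DualHom k T X →ₗ[RingelDualRing S T] DualHom k T Y :=
  { (f.lcomp k T).dualMap with map_smul' := fun _ _ => rfl }

theorem isShortExact_map {f : X →ₗ[S] Y} {g : Y →ₗ[S] Z} (h : IsShortExact f g)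
    (hZ : ExtVanishes S Z T 1) : IsShortExact (map k T f) (map k T g) :=
  have h₁ : IsShortExact (g.lcomp k T) (f.lcomp k T) :=
    h.lcomp (h.exists_extend_of_extVanishes_one hZ)
  have h₂ := h₁.lcomp (k := k) (M := k) (LinearMap.dualMap_surjective_of_injective h₁.injective)
  ⟨h₂.injective, h₂.exact, h₂.surjective⟩

theorem injective_self : Module.Injective (RingelDualRing S T) (DualHom k T T) := by
  have := injective_coextendScalars (S := RingelDualRing S T) k (ModuleCat.of k k)
  let op : (T →ₗ[S] T) ≃ₗ[k] (ModuleCat.restrictScalars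
      (algebraMap k (RingelDualRing S T))).obj (ModuleCat.of _ (RingelDualRing S T)) :=
    { MulOpposite.opAddEquiv (α := Module.End S T) with
      map_smul' := fun c a => Algebra.smul_def c (MulOpposite.op a) }
  let e : (ModuleCat.coextendScalars (algebraMap k (RingelDualRing S T))).obj (ModuleCat.of k k)
      ≃ₗ[RingelDualRing S T] DualHom k T T :=
    (ModuleCat.CoextendScalars.equiv _ _).trans
      { op.dualMap with map_smul' := fun _ _ => rfl }
  exact ((Module.Baer.of_injective this).of_equiv e).injective

end DualHom

variable {T}

theorem finite_hom [Module.Finite k T] [Module.Finite S X] : Module.Finite k (X →ₗ[S] T) := by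
  obtain ⟨n, f, hf⟩ := Module.Finite.exists_fin' S X
  have : Module.Finite k ((Fin n → S) →ₗ[S] T) := .equiv (LinearEquiv.piRing S T (Fin n) k).symm
  exact .of_injective (f.lcomp k T) fun u v h => (LinearMap.cancel_right hf).1 h

theorem finite_ringelDualRing [Module.Finite k T] [Module.Finite S T] :
    Module.Finite k (RingelDualRing S T) :=
  have : Module.Finite k (Module.End S T) := finite_hom k
  .equiv (MulOpposite.opLinearEquiv k)

instance [Module.Finite k T] [Module.Finite S X] :
    Module.Finite (RingelDualRing S T) (DualHom k T X) :=
  have : Module.Finite k (X →ₗ[S] T) := finite_hom k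
  have : Module.Finite k (DualHom k T X) := inferInstance
  .of_restrictScalars_finite k _ _

end HomDual

section FullyFaithful

variable {k S : Type} [Field k] [Ring S] [Algebra k S] {T : ModuleCat.{0} S} [Module k T]
  [IsScalarTower k S T] {C C' M : ModuleCat.{0} S} {n n' : ℕ}

theorem DualHom.injective_map {i : C →ₗ[S] (Fin n → T)} (hi : Injective i) :
    Injective (map k T : (M →ₗ[S] C) → _) := by
  intro f g hfg
  have h (j : Fin n) : (LinearMap.proj j ∘ₗ i) ∘ₗ f = (LinearMap.proj j ∘ₗ i) ∘ₗ g := by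
    rw [← sub_eq_zero, ← Module.forall_dual_apply_eq_zero_iff k]
    intro φ
    rw [map_sub, sub_eq_zero]
    exact LinearMap.congr_fun (LinearMap.congr_fun hfg φ) (LinearMap.proj j ∘ₗ i)
  refine (LinearMap.cancel_left hi).1 (LinearMap.ext fun x => funext fun j => ?_)
  exact LinearMap.congr_fun (h j) x

variable {i : C →ₗ[S] (Fin n → T)} {π : (Fin n → T) →ₗ[S] C'} {i' : C' →ₗ[S] (Fin n' → T)}

theorem exists_comp_eq_of_map_comp (h : IsShortExact i π) (hi' : Injective i')
    (hT : ExtVanishes S C' T 1) (Φ : (C →ₗ[S] T) →+ (M →ₗ[S] T))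
    (hΦ : ∀ (a : Module.End S T) t, Φ (a ∘ₗ t) = a ∘ₗ Φ t) :
    ∃ g : M →ₗ[S] C, ∀ t, Φ t = t ∘ₗ g := by
  let w : M →ₗ[S] (Fin n → T) := LinearMap.pi fun j => Φ (LinearMap.proj j ∘ₗ i)
  have hw (v : (Fin n → T) →ₗ[S] T) : Φ (v ∘ₗ i) = v ∘ₗ w := by
    rw [comp_eq_sum_single_proj v i, comp_eq_sum_single_proj v w, map_sum]
    exact Finset.sum_congr rfl fun j _ => hΦ _ _
  obtain ⟨g, hg⟩ := h.exists_lift (u := w) <| by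
    refine (LinearMap.cancel_left hi').1 (LinearMap.ext fun x => funext fun j => ?_)
    have h0 := hw (LinearMap.proj j ∘ₗ i' ∘ₗ π)
    rw [LinearMap.comp_assoc, LinearMap.comp_assoc, h.exact.linearMap_comp_eq_zero,
      LinearMap.comp_zero, LinearMap.comp_zero, map_zero] at h0
    exact (LinearMap.congr_fun h0 x).symm.trans (map_zero (LinearMap.proj j ∘ₗ i')).symm
  refine ⟨g, fun t => ?_⟩
  obtain ⟨v, rfl⟩ := h.exists_extend_of_extVanishes_one hT t
  rw [hw, LinearMap.comp_assoc, hg]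

theorem DualHom.surjective_map [Module.Finite k T] [Module.Finite S M] (h : IsShortExact i π)
    (hi' : Injective i') (hT : ExtVanishes S C' T 1) :
    Surjective (map k T : (M →ₗ[S] C) → _) := by
  intro u
  have : Module.Finite k (M →ₗ[S] T) := finite_hom k
  let Φ : (C →ₗ[S] T) →ₗ[k] (M →ₗ[S] T) :=
    (Module.evalEquiv k (M →ₗ[S] T)).symm ∘ₗ (u.restrictScalars k).dualMap ∘ₗ Module.Dual.eval k _
  have hΦ (φ : DualHom k T M) (t : C →ₗ[S] T) : φ (Φ t) = u φ t :=
    Module.apply_evalEquiv_symm_apply k _ φ _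
  obtain ⟨g, hg⟩ := exists_comp_eq_of_map_comp h hi' hT Φ.toAddMonoidHom fun a t => by
    refine (Module.evalEquiv k (M →ₗ[S] T)).injective (LinearMap.ext fun φ => ?_)
    calc φ (Φ (a ∘ₗ t)) = (MulOpposite.op a • u φ) t := hΦ _ _
      _ = (MulOpposite.op a • φ) (Φ t) := by rw [hΦ, map_smul]
  exact ⟨g, LinearMap.ext fun φ => LinearMap.ext fun t =>
    (congrArg φ (hg t)).symm.trans (hΦ φ t)⟩

variable [Module k M] [IsScalarTower k S M]

theorem exists_dual_of_balanced (h : IsShortExact i π)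
    (hT : ExtVanishes S C' T 1) (hM : ExtVanishes S C' M 1)
    (hM' : ∀ w : C' →ₗ[S] M, ∃ b, b ∘ₗ i' = w)
    (β : (T →ₗ[S] M) →ₗ[k] (C →ₗ[S] T) →ₗ[k] k)
    (hβ : ∀ t (a : Module.End S T) s, β (t ∘ₗ a) s = β t (a ∘ₗ s)) :
    ∃ θ : (C →ₗ[S] M) →ₗ[k] k, ∀ t s, β t s = θ (t ∘ₗ s) := by
  let Θ : ((Fin n → T) →ₗ[S] M) →ₗ[k] k := ∑ j,
    β.flip (LinearMap.proj j ∘ₗ i) ∘ₗ (LinearMap.single S (fun _ : Fin n => T) j).lcomp k M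
  have hΘ (t : T →ₗ[S] M) (v : (Fin n → T) →ₗ[S] T) : Θ (t ∘ₗ v) = β t (v ∘ₗ i) := by
    rw [comp_eq_sum_single_proj v i, map_sum, LinearMap.sum_apply]
    exact Finset.sum_congr rfl fun j _ => hβ t (v ∘ₗ LinearMap.single S (fun _ => T) j) _
  have hHom := h.lcomp (k := k) (M := M) (h.exists_extend_of_extVanishes_one hM)
  obtain ⟨θ, hθ⟩ := hHom.exists_desc (u := Θ) <| LinearMap.ext fun w => by
    obtain ⟨b, rfl⟩ := hM' w
    change Θ (b ∘ₗ i' ∘ₗ π) = 0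
    rw [comp_eq_sum_single_proj b (i' ∘ₗ π), map_sum]
    refine Finset.sum_eq_zero fun j _ => ?_
    rw [hΘ, LinearMap.comp_assoc, LinearMap.comp_assoc, h.exact.linearMap_comp_eq_zero,
      LinearMap.comp_zero, LinearMap.comp_zero, map_zero]
  refine ⟨θ, fun t s => ?_⟩
  obtain ⟨v, rfl⟩ := h.exists_extend_of_extVanishes_one hT s
  rw [← hΘ, ← hθ]
  rfl

end FullyFaithful

section Comparison

variable {k S Λ : Type} [Field k] [Ring S] [Algebra k S] [Fintype Λ] [PartialOrder Λ]
  {Q : QHData S Λ}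

theorem QHData.exists_presentation [IsArtinianRing S] [EnoughFiniteInjectives S]
    {X : ModuleCat.{0} S} (hX : IsFilteredBy Q.std Set.univ X) :
    ∃ (K P : ModuleCat.{0} S) (f : K →ₗ[S] P) (g : P →ₗ[S] X), IsShortExact f g ∧
      Module.Projective S P ∧ IsFilteredBy Q.std Set.univ P ∧ IsFilteredBy Q.std Set.univ K := by
  have := hX.finite Q.finite_std
  obtain ⟨n, g, hg⟩ := Module.Finite.exists_fin' S X
  refine ⟨ModuleCat.of S (LinearMap.ker g), ModuleCat.of S (Fin n → S), _, g, isShortExact_ker hg,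
    inferInstance, Q.isFilteredBy_std_of_extVanishes _ fun m => .of_projective 0,
    Q.isFilteredBy_std_of_extVanishes _ fun m => ?_⟩
  exact (isShortExact_ker hg).extVanishes_sub_left (.of_projective 0) (hX.extVanishes_costd m 1)

theorem IsFilteredBy.exists_retract {M : ModuleCat.{0} S} {m : Λ} [Nontrivial M]
    (h : IsFilteredBy Q.costd {m} M) :
    ∃ (i : Q.costd m →ₗ[S] M) (r : M →ₗ[S] Q.costd m), r ∘ₗ i = LinearMap.id := by
  cases h with
  | zero _ h => exact absurd h (not_subsingleton M)
  | @extend A _ l hl f g h hA =>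
    obtain rfl : l = m := hl
    obtain ⟨i, hi⟩ := h.exists_comp_eq_of_extVanishes_one (hA.extVanishes_right (n := 1) <| by
      rintro _ rfl
      exact Q.extVanishes_costd_of_forall_le fun _ h => h.le_of_costd) LinearMap.id
    exact ⟨i, g, hi⟩

variable {T : ModuleCat.{0} S} [Module k T] [IsScalarTower k S T]

theorem IsFilteredBy.dualHom {ι : Type*} {D : ι → ModuleCat.{0} S} {s : Set ι}
    {X : ModuleCat.{0} S} (hX : IsFilteredBy D s X) (hD : ∀ i ∈ s, ExtVanishes S (D i) T 1) :
    IsFilteredBy (fun i => ModuleCat.of (RingelDualRing S T) (DualHom k T (D i))) s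
      (ModuleCat.of (RingelDualRing S T) (DualHom k T X)) := by
  induction hX with
  | zero X h => exact .zero _ (inferInstanceAs (Subsingleton (DualHom k T X)))
  | extend hi h _ ih => exact .extend hi (DualHom.isShortExact_map k T h (hD _ hi)) ih

theorem DualHom.extVanishesAbove_pow (hT : ExtVanishes S T T 1) (n : ℕ) {N : Type}
    [AddCommGroup N] [Module (RingelDualRing S T) N] :
    ExtVanishesAbove (RingelDualRing S T) N (DualHom k T (Fin n → T)) 0
  | _ + 1, _ =>
    have := injective_self k T
    have hpow := (IsFilteredBy.single (D := fun _ : Unit => T) (Set.mem_univ ())).pow n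
    (hpow.dualHom (k := k) fun _ _ => hT).extVanishes_right fun _ _ => .of_injective _

/-- The homomorphism `Hom_S(T, M) → D Hom_S(Y, T)` that a functional on `Hom_S(Y, M)` induces by
composition of homomorphisms. -/
def DualHom.ofDual {M : ModuleCat.{0} S} [Module k M] [IsScalarTower k S M] {Y : Type}
    [AddCommGroup Y] [Module S Y] (θ : Module.Dual k (Y →ₗ[S] M)) :
    (T →ₗ[S] M) →ₗ[RingelDualRing S T] DualHom k T Y where
  toFun t :=
    { toFun := fun s => θ (t ∘ₗ s)
      map_add' := fun s s' => by rw [LinearMap.comp_add, map_add]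
      map_smul' := fun c s => by
        rw [← map_smul]
        exact congrArg θ (LinearMap.ext fun x => (t.restrictScalars k).map_smul c (s x)) }
  map_add' t t' := LinearMap.ext fun s =>
    (congrArg θ (LinearMap.add_comp s t' t)).trans (map_add θ _ _)
  map_smul' _ _ := rfl

/-- A module in `F(Δ) ∩ F(∇)` into which every standard module embeds with cokernel in `F(Δ)`.
It plays the role of a full tilting module in the comparison of dimensions. -/
structure IsTiltingCogenerator (Q : QHData S Λ) (T : ModuleCat.{0} S) : Prop where
  std : IsFilteredBy Q.std Set.univ T
  costd : IsFilteredBy Q.costd Set.univ T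
  exists_isCostdMono (l : Λ) : ∃ j : Q.std l →ₗ[S] T, IsCostdMono Q j

namespace IsTiltingCogenerator

variable {X : ModuleCat.{0} S}

theorem extVanishes (hT : IsTiltingCogenerator Q T) (hX : IsFilteredBy Q.std Set.univ X) (n : ℕ) :
    ExtVanishes S X T (n + 1) :=
  hT.costd.extVanishes_right fun m _ => hX.extVanishes_costd m n

theorem nontrivial_dualHom_std (hT : IsTiltingCogenerator Q T) (l : Λ) :
    Nontrivial (DualHom k T (Q.std l)) := by
  obtain ⟨j, hj⟩ := hT.exists_isCostdMono l
  obtain ⟨x, hx⟩ := exists_ne (0 : Q.std l)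
  have : Nontrivial (Q.std l →ₗ[S] T) := ⟨j, 0, fun h => hx (hj.injective (by simp [h]))⟩
  infer_instance

variable [IsArtinianRing S] [EnoughFiniteInjectives S]

theorem exists_copresentation (hT : IsTiltingCogenerator Q T)
    (hX : IsFilteredBy Q.std Set.univ X) :
    ∃ (n : ℕ) (C : ModuleCat.{0} S) (i : X →ₗ[S] (Fin n → T)) (π : (Fin n → T) →ₗ[S] C),
      IsShortExact i π ∧ IsFilteredBy Q.std Set.univ C := by
  obtain ⟨n, i, hi⟩ := hT.costd.exists_isCostdMono_pow hT.exists_isCostdMono hX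
  exact ⟨n, ModuleCat.of S _, i, _, isShortExact_mkQ_range hi.injective,
    hi.isFilteredBy_quotient (M := ModuleCat.of S (Fin n → T)) (hT.std.pow n)⟩

variable {M : ModuleCat.{0} S}

theorem injective_map (hT : IsTiltingCogenerator Q T) (hX : IsFilteredBy Q.std Set.univ X) :
    Injective (DualHom.map k T : (M →ₗ[S] X) → _) :=
  have ⟨_, _, _, _, h, _⟩ := hT.exists_copresentation hX
  DualHom.injective_map h.injective

theorem surjective_map [Module.Finite k T] [Module.Finite S M] (hT : IsTiltingCogenerator Q T)
    (hX : IsFilteredBy Q.std Set.univ X) :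
    Surjective (DualHom.map k T : (M →ₗ[S] X) → _) :=
  have ⟨_, _, _, _, h, hC⟩ := hT.exists_copresentation hX
  have ⟨_, _, _, _, h', _⟩ := hT.exists_copresentation hC
  DualHom.surjective_map h h'.injective (hT.extVanishes hC 0)

theorem surjective_ofDual [Module k M] [IsScalarTower k S M] (hT : IsTiltingCogenerator Q T)
    (hX : IsFilteredBy Q.std Set.univ X) (hM : IsFilteredBy Q.costd Set.univ M) :
    Surjective (DualHom.ofDual : Module.Dual k (X →ₗ[S] M) → (T →ₗ[S] M) →ₗ[_] _) := by
  intro u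
  have hExt {C : ModuleCat.{0} S} (hC : IsFilteredBy Q.std Set.univ C) : ExtVanishes S C M 1 :=
    hM.extVanishes_right fun m _ => hC.extVanishes_costd m 0
  obtain ⟨n, C, i, π, h, hC⟩ := hT.exists_copresentation hX
  obtain ⟨n', C', i', π', h', hC'⟩ := hT.exists_copresentation hC
  obtain ⟨θ, hθ⟩ := exists_dual_of_balanced h (hT.extVanishes hC 0) (hExt hC)
    (h'.exists_extend_of_extVanishes_one (hExt hC')) (u.restrictScalars k) fun t a s =>
      LinearMap.congr_fun (u.map_smul (MulOpposite.op a) t) s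
  exact ⟨θ, LinearMap.ext fun t => LinearMap.ext fun s => (hθ t s).symm⟩

theorem extVanishes_dualHom [Module.Finite k T] [Module.Finite S M]
    (hT : IsTiltingCogenerator Q T) (hX : IsFilteredBy Q.std Set.univ X)
    (h : ExtVanishes S M X 1) :
    ExtVanishes (RingelDualRing S T) (DualHom k T M) (DualHom k T X) 1 := by
  obtain ⟨n, C, i, π, hi, hC⟩ := hT.exists_copresentation hX
  refine (DualHom.isShortExact_map k T hi (hT.extVanishes hC 0)).extVanishes_one_of_exists_comp_eq
    (DualHom.extVanishesAbove_pow (hT.extVanishes hT.std 0) n 1 one_pos) fun u => ?_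
  obtain ⟨w, rfl⟩ := hT.surjective_map hC u
  obtain ⟨v, rfl⟩ := hi.exists_comp_eq_of_extVanishes_one h w
  exact ⟨DualHom.map k T v, rfl⟩

end IsTiltingCogenerator

/-- A tilting cogenerator `T` over `S` with a quasi-hereditary structure on its Ringel dual whose
standard modules are the `Hom_S(T, ∇(m))`. -/
structure IsRingelDualPair (Q : QHData S Λ) (T : ModuleCat.{0} S)
    (Q' : QHData (RingelDualRing S T) Λᵒᵈ) : Prop extends IsTiltingCogenerator Q T where
  std_equiv (m : Λ) : Nonempty
    (Q'.std (.toDual m) ≃ₗ[RingelDualRing S T] (T →ₗ[S] Q.costd m))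

namespace IsRingelDualPair

variable {Q' : QHData (RingelDualRing S T) Λᵒᵈ} {X : ModuleCat.{0} S}
  [IsArtinianRing S] [EnoughFiniteInjectives S]

theorem extVanishes_std_dualHom (hT : IsRingelDualPair Q T Q')
    (hX : IsFilteredBy Q.std Set.univ X) (m : Λ) :
    ExtVanishes (RingelDualRing S T) (Q'.std (.toDual m)) (DualHom k T X) 1 := by
  obtain ⟨ε⟩ := hT.std_equiv m
  refine .congr_left ε ?_
  let : Module k (Q.costd m) := Module.compHom _ (algebraMap k S)
  have : IsScalarTower k S (Q.costd m) := .of_algebraMap_smul fun _ _ => rfl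
  obtain ⟨n, C, i, π, h, hC⟩ := hT.exists_copresentation hX
  refine (DualHom.isShortExact_map k T h (hT.extVanishes hC 0)).extVanishes_one_of_exists_comp_eq
    (DualHom.extVanishesAbove_pow (hT.extVanishes hT.std 0) n 1 one_pos) fun u => ?_
  obtain ⟨θ, rfl⟩ := hT.surjective_ofDual hC (.single (Set.mem_univ m)) u
  have hπ : Injective (π.lcomp k (Q.costd m)) := fun v w => (LinearMap.cancel_right h.surjective).1
  obtain ⟨Θ, rfl⟩ := LinearMap.dualMap_surjective_of_injective hπ θ
  exact ⟨DualHom.ofDual Θ, rfl⟩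

variable [Module.Finite k T] [IsArtinianRing (RingelDualRing S T)]
  [EnoughFiniteInjectives (RingelDualRing S T)]

theorem isFilteredBy_costd_dualHom (hT : IsRingelDualPair Q T Q')
    (hX : IsFilteredBy Q.std Set.univ X) :
    IsFilteredBy Q'.costd Set.univ (ModuleCat.of _ (DualHom k T X)) :=
  have := hX.finite Q.finite_std
  Q'.isFilteredBy_costd_of_extVanishes _ fun m => hT.extVanishes_std_dualHom hX m.ofDual

theorem isFilteredBy_costd_dualHom_std (hT : IsRingelDualPair Q T Q') (l : Λ) :
    IsFilteredBy Q'.costd {.toDual l} (ModuleCat.of _ (DualHom k T (Q.std l))) := by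
  have hl : IsFilteredBy Q.std Set.univ (Q.std l) := .single (Set.mem_univ l)
  refine (hT.isFilteredBy_costd_dualHom hl).of_costd_of_hom_std.mono ?_
  rintro m ⟨-, f, hf⟩
  by_contra hne
  obtain ⟨ε⟩ := hT.std_equiv m.ofDual
  let : Module k (Q.costd m.ofDual) := Module.compHom _ (algebraMap k S)
  have : IsScalarTower k S (Q.costd m.ofDual) := .of_algebraMap_smul fun _ _ => rfl
  obtain ⟨θ, hθ⟩ := hT.surjective_ofDual (k := k) hl (.single (Set.mem_univ m.ofDual))
    (f ∘ₗ ε.symm.toLinearMap)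
  have hf0 : f ∘ₗ ε.symm.toLinearMap = 0 := by
    rw [← hθ]
    ext t s
    have hts : t ∘ₗ s = 0 := Q.std_hom_costd_eq_zero (fun h => hne h.symm) _
    exact (congrArg θ hts).trans (map_zero θ)
  exact hf ((LinearMap.cancel_right ε.symm.surjective).1 (hf0.trans (LinearMap.zero_comp _).symm))

end IsRingelDualPair

end Comparison

section MainComparison

variable {k S Λ : Type} [Field k] [Ring S] [Algebra k S] [Fintype Λ] [PartialOrder Λ]
  {Q : QHData S Λ} {T : ModuleCat.{0} S} [Module k T] [IsScalarTower k S T]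
  {X : ModuleCat.{0} S} [IsArtinianRing S] [EnoughFiniteInjectives S]

namespace IsTiltingCogenerator

variable [Module.Finite k T]

theorem forall_extVanishesAbove_zero_right_iff (hT : IsTiltingCogenerator Q T)
    (hX : IsFilteredBy Q.std Set.univ X) :
    (∀ l, ExtVanishesAbove S (Q.std l) X 0) ↔ ∀ N : ModuleCat.{0} (RingelDualRing S T),
      ExtVanishesAbove (RingelDualRing S T) N (DualHom k T X) 0 := by
  obtain ⟨n, C, f, g, h, hC⟩ := hT.exists_copresentation hX
  have hG := DualHom.isShortExact_map k T h (hT.extVanishes hC 0)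
  have hT₁ := hT.extVanishes hT.std 0
  constructor
  · intro hl N i hi
    obtain ⟨r, hr⟩ := h.exists_extend_of_extVanishes_one
      (hC.extVanishes_left fun l _ => hl l 1 one_pos) LinearMap.id
    exact (DualHom.extVanishesAbove_pow hT₁ n i hi).retract_right (i := DualHom.map k T f)
      (r := DualHom.map k T r) (congrArg (DualHom.map k T) hr)
  · rintro hN l (_ | i) hi
    · omega
    obtain ⟨u, hu⟩ := hG.exists_extend_of_extVanishes_one
      (hN (ModuleCat.of _ (DualHom k T C)) 1 one_pos) LinearMap.id
    have : Module.Finite S (Fin n → T) := (hT.std.pow n).finite Q.finite_std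
    obtain ⟨r, rfl⟩ := hT.surjective_map (M := ModuleCat.of S (Fin n → T)) hX u
    exact ((hT.costd.pow n).extVanishes_std l i).retract_right (hT.injective_map (k := k) hX hu)

theorem forall_extVanishesAbove_right_iff (hT : IsTiltingCogenerator Q T)
    (hX : IsFilteredBy Q.std Set.univ X) (d : ℕ) :
    (∀ l, ExtVanishesAbove S (Q.std l) X d) ↔ ∀ N : ModuleCat.{0} (RingelDualRing S T),
      ExtVanishesAbove (RingelDualRing S T) N (DualHom k T X) d := by
  induction d generalizing X with
  | zero => exact hT.forall_extVanishesAbove_zero_right_iff hX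
  | succ d ih =>
    obtain ⟨n, C, f, g, h, hC⟩ := hT.exists_copresentation hX
    have hG := DualHom.isShortExact_map k T h (hT.extVanishes hC 0)
    have hTn (l : Λ) : ExtVanishesAbove S (Q.std l) (Fin n → T) 0
      | i + 1, _ => (hT.costd.pow n).extVanishes_std l i
    calc (∀ l, ExtVanishesAbove S (Q.std l) X (d + 1))
      _ ↔ ∀ l, ExtVanishesAbove S (Q.std l) C d :=
        forall_congr' fun l => h.extVanishesAbove_sub_right_iff (hTn l)
      _ ↔ ∀ N : ModuleCat.{0} (RingelDualRing S T),
          ExtVanishesAbove (RingelDualRing S T) N (DualHom k T C) d := ih hC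
      _ ↔ _ := forall_congr' fun N => (hG.extVanishesAbove_sub_right_iff
        (DualHom.extVanishesAbove_pow (hT.extVanishes hT.std 0) n)).symm

end IsTiltingCogenerator

variable {Q' : QHData (RingelDualRing S T) Λᵒᵈ} [IsArtinianRing (RingelDualRing S T)]
  [EnoughFiniteInjectives (RingelDualRing S T)]

namespace IsRingelDualPair

variable [Module.Finite k T]

theorem exists_retract_dualHom_std (hT : IsRingelDualPair Q T Q') (l : Λ) :
    ∃ (i : Q'.costd (.toDual l) →ₗ[RingelDualRing S T] DualHom k T (Q.std l))
      (r : DualHom k T (Q.std l) →ₗ[RingelDualRing S T] Q'.costd (.toDual l)),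
      r ∘ₗ i = LinearMap.id :=
  have := hT.nontrivial_dualHom_std (k := k) l
  (hT.isFilteredBy_costd_dualHom_std l).exists_retract

theorem extVanishesAbove_dualHom_std_left_iff (hT : IsRingelDualPair Q T Q') (l : Λ) {N : Type}
    [AddCommGroup N] [Module (RingelDualRing S T) N] {d : ℕ} :
    ExtVanishesAbove (RingelDualRing S T) (DualHom k T (Q.std l)) N d ↔
      ExtVanishesAbove (RingelDualRing S T) (Q'.costd (.toDual l)) N d := by
  obtain ⟨i, r, hri⟩ := hT.exists_retract_dualHom_std (k := k) l
  refine forall₂_congr fun j _ => ⟨fun h => h.retract_left hri, fun h => ?_⟩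
  refine (hT.isFilteredBy_costd_dualHom_std (k := k) l).extVanishes_left ?_
  rintro _ rfl
  exact h

theorem extVanishesAbove_dualHom_std_right_iff (hT : IsRingelDualPair Q T Q') (l : Λ) {N : Type}
    [AddCommGroup N] [Module (RingelDualRing S T) N] {d : ℕ} :
    ExtVanishesAbove (RingelDualRing S T) N (DualHom k T (Q.std l)) d ↔
      ExtVanishesAbove (RingelDualRing S T) N (Q'.costd (.toDual l)) d := by
  obtain ⟨i, r, hri⟩ := hT.exists_retract_dualHom_std (k := k) l
  refine forall₂_congr fun j _ => ⟨fun h => h.retract_right hri, fun h => ?_⟩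
  refine (hT.isFilteredBy_costd_dualHom_std (k := k) l).extVanishes_right ?_
  rintro _ rfl
  exact h

theorem isFilteredBy_std_dualHom (hT : IsRingelDualPair Q T Q') [Module.Finite S X]
    [Module.Projective S X] :
    IsFilteredBy Q'.std Set.univ (ModuleCat.of _ (DualHom k T X)) :=
  Q'.isFilteredBy_std_of_extVanishes _ fun m => by
    obtain ⟨i, r, hri⟩ := hT.exists_retract_dualHom_std (k := k) m.ofDual
    exact (hT.extVanishes_dualHom (.single (Set.mem_univ m.ofDual))
      (.of_projective 0)).retract_right hri

theorem forall_extVanishesAbove_zero_left_iff (hT : IsRingelDualPair Q T Q')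
    (hX : IsFilteredBy Q.std Set.univ X) :
    (∀ N : ModuleCat.{0} S, ExtVanishesAbove S X N 0) ↔
      ∀ m, ExtVanishesAbove (RingelDualRing S T) (DualHom k T X) (Q'.costd m) 0 := by
  have := hX.finite Q.finite_std
  constructor
  · rintro hN m (_ | i) hi
    · omega
    have : Module.Projective S X := projective_of_extVanishes fun N _ _ =>
      hN (ModuleCat.of S N) 1 one_pos
    exact (hT.isFilteredBy_std_dualHom (k := k)).extVanishes_costd m i
  · rintro hm N i hi
    obtain ⟨K, P, f, g, h, _, hP, hK⟩ := QHData.exists_presentation hX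
    have hG := DualHom.isShortExact_map k T h (hT.extVanishes hX 0)
    obtain ⟨u, hu⟩ := hG.exists_comp_eq_of_extVanishes_one
      ((hT.isFilteredBy_costd_dualHom hK).extVanishes_right fun m _ => hm m 1 one_pos) LinearMap.id
    obtain ⟨v, rfl⟩ := hT.surjective_map hP u
    exact (ExtVanishesAbove.of_projective i hi).retract_left (hT.injective_map (k := k) hX hu)

theorem forall_extVanishesAbove_left_iff (hT : IsRingelDualPair Q T Q')
    (hX : IsFilteredBy Q.std Set.univ X) (d : ℕ) :
    (∀ N : ModuleCat.{0} S, ExtVanishesAbove S X N d) ↔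
      ∀ m, ExtVanishesAbove (RingelDualRing S T) (DualHom k T X) (Q'.costd m) d := by
  induction d generalizing X with
  | zero => exact hT.forall_extVanishesAbove_zero_left_iff hX
  | succ d ih =>
    obtain ⟨K, P, f, g, h, _, hP, hK⟩ := QHData.exists_presentation hX
    have hG := DualHom.isShortExact_map k T h (hT.extVanishes hX 0)
    have := hP.finite Q.finite_std
    have hGP (m) : ExtVanishesAbove (RingelDualRing S T) (DualHom k T P) (Q'.costd m) 0
      | i + 1, _ => (hT.isFilteredBy_std_dualHom (k := k)).extVanishes_costd m i
    calc (∀ N : ModuleCat.{0} S, ExtVanishesAbove S X N (d + 1))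
      _ ↔ ∀ N : ModuleCat.{0} S, ExtVanishesAbove S K N d :=
        forall_congr' fun N => h.extVanishesAbove_quotient_left_iff .of_projective
      _ ↔ ∀ m, ExtVanishesAbove (RingelDualRing S T) (DualHom k T K) (Q'.costd m) d := ih hK
      _ ↔ _ := forall_congr' fun m => (hG.extVanishesAbove_quotient_left_iff (hGP m)).symm

end IsRingelDualPair

variable (k)

theorem IsRingelDualPair.projdimLE_std_iff [Module.Finite k T] (hT : IsRingelDualPair Q T Q')
    (l : Λ) (d : ℕ) :
    ProjdimLE S (Q.std l) d ↔ WfdLE (RingelDualRing S T) Q' (Q'.costd (.toDual l)) d := by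
  rw [projdimLE_iff, wfdLE_iff,
    hT.forall_extVanishesAbove_left_iff (k := k) (.single (Set.mem_univ l))]
  exact forall_congr' fun m => hT.extVanishesAbove_dualHom_std_left_iff l

theorem IsRingelDualPair.gfdLE_std_iff [Module.Finite k T] (hT : IsRingelDualPair Q T Q')
    (l : Λ) (d : ℕ) :
    GfdLE S Q (Q.std l) d ↔ InjdimLE (RingelDualRing S T) (Q'.costd (.toDual l)) d := by
  rw [gfdLE_iff, injdimLE_iff,
    hT.forall_extVanishesAbove_right_iff (k := k) (.single (Set.mem_univ l))]
  exact forall_congr' fun N => hT.extVanishesAbove_dualHom_std_right_iff l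

end MainComparison

end QHPaper

open QHPaper in
/-- Let `S` be a quasi-hereditary algebra with Ringel dual `S'`. For every
`lam ∈ Λ⁺`, the projective dimension of the standard module `Δ(lam)` of `S` equals the
Δ-filtration dimension of the costandard module `∇'(lam)` of `S'`, and the ∇-filtration
dimension of `Δ(lam)` equals the injective dimension of `∇'(lam)`. -/
theorem stmt7 (k S Λ : Type) [Field k] [Ring S] [Algebra k S] [FiniteDimensional k S]
    [Fintype Λ] [PartialOrder Λ]
    (QH : QHData S Λ) (T : ModuleCat.{0} S)
    (QH' : QHData (RingelDualRing S T) Λᵒᵈ)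
    (hRD : IsRingelDualData S QH T QH') (lam : Λ) :
    projdim S (QH.std lam) =
      wfd (RingelDualRing S T) QH' (QH'.costd (OrderDual.toDual lam)) ∧
    gfd S QH (QH.std lam) =
      injdim (RingelDualRing S T) (QH'.costd (OrderDual.toDual lam)) := by
  obtain ⟨⟨⟨hstd, hcostd⟩, _, -⟩, hQ'⟩ := hRD
  let : Module k T := Module.compHom _ (algebraMap k S)
  have : IsScalarTower k S T := .of_algebraMap_smul fun _ _ => rfl
  have : Module.Finite k T := .trans S T
  have := finite_ringelDualRing (S := S) (T := T) k
  have := IsArtinianRing.of_finite k S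
  have := IsArtinianRing.of_finite k (RingelDualRing S T)
  have := enoughFiniteInjectives_of_finite k (S := S)
  have := enoughFiniteInjectives_of_finite k (S := RingelDualRing S T)
  rw [inStdFilt_iff] at hstd
  rw [inCostdFilt_iff] at hcostd
  have hT : IsRingelDualPair QH T QH' :=
    ⟨⟨hstd, hcostd, exists_isCostdMono_std_tilting hstd hQ'⟩, hQ'⟩
  constructor
  · exact congrArg sInf (Set.ext (hT.projdimLE_std_iff k lam))
  · exact congrArg sInf (Set.ext (hT.gfdLE_std_iff k lam))
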